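/- arXiv:math/0306390 — 5 statements merged into one kernel-verified Lean document; each statement's English description precedes it below -/
import Mathlib

section
/- Let A be an open subset of ℝ³ and let U : A → ℝ³ be a smooth map with ‖U(x)‖ = 1 for every x ∈ A. For x ∈ A let P_x : ℝ³ → ℝ³ be the orthogonal projection P_x(v) = v − ⟨v, U(x)⟩U(x) onto U(x)^⊥, let × denote the cross product on ℝ³, and for C¹ vector fields X, Y : A → ℝ³ set [X,Y](x) = (DY)_x(X(x)) − (DX)_x(Y(x)), where (DY)_x denotes the Fréchet derivative. Then the following are equivalent: (1) for every smooth vector field X : A → ℝ³ with ⟨X(x), U(x)⟩ = 0 for all x ∈ A, one has P_x([U, U×X](x)) = U(x) × P_x([U, X](x)) for all x ∈ A; (2) for every x ∈ A and every v ∈ ℝ³ with ⟨v, U(x)⟩ = 0, one has (DU)_x(U(x) × v) = U(x) × (DU)_x(v). -/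
/-- Dot product (the standard inner product) on `ℝ³`. -/
def dot3 (u v : Fin 3 → ℝ) : ℝ := ∑ i, u i * v i

/-- Orthogonal projection onto the orthogonal complement of the unit vector `u`:
`v ↦ v − ⟨v,u⟩ u`. -/
def projPerp (u v : Fin 3 → ℝ) : Fin 3 → ℝ := v - dot3 v u • u

/-- Lie bracket of vector fields on `ℝ³`: `[X,Y](x) = (DY)ₓ(X(x)) − (DX)ₓ(Y(x))`. -/
noncomputable def bracket3 (X Y : (Fin 3 → ℝ) → (Fin 3 → ℝ)) (x : Fin 3 → ℝ) : Fin 3 → ℝ :=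
  fderiv ℝ Y x (X x) - fderiv ℝ X x (Y x)

/-!
For a unit vector `u`, `projPerp u v = u × (v × u)`, so the projection kills `a × w` whenever `a`
and `w` are both orthogonal to `u`. Differentiating `⟨U, U⟩ = 1` shows that `DU` takes values in
`U^⊥`. Hence, if `X ⊥ U`, the term `DU(U) × X` in the product rule for `D(U × X)(U)` is projected
away, the terms `U × DX(U)` on both sides of condition (1) cancel, and what remains is
`DU(U × X) = U × DU(X)`, which at each point involves only the value of `X` there. Conversely,
every `v ⊥ U x` is the value at `x` of a field orthogonal to `U`, namely `y ↦ projPerp (U y) v`.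
-/

open scoped Matrix Topology

section Bilinear

variable {𝕜 : Type*} [NontriviallyNormedField 𝕜] [CompleteSpace 𝕜]
  {D : Type*} [NormedAddCommGroup D] [NormedSpace 𝕜 D]

theorem fderiv_bilinear_apply
    {E F G : Type*} [NormedAddCommGroup E] [NormedSpace 𝕜 E] [FiniteDimensional 𝕜 E]
    [NormedAddCommGroup F] [NormedSpace 𝕜 F] [FiniteDimensional 𝕜 F]
    [NormedAddCommGroup G] [NormedSpace 𝕜 G]
    (B : E →ₗ[𝕜] F →ₗ[𝕜] G) {f : D → E} {g : D → F} {x : D}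
    (hf : DifferentiableAt 𝕜 f x) (hg : DifferentiableAt 𝕜 g x) (h : D) :
    fderiv 𝕜 (fun y => B (f y) (g y)) x h =
      B (fderiv 𝕜 f x h) (g x) + B (f x) (fderiv 𝕜 g x h) := by
  simpa [add_comm] using
    DFunLike.congr_fun (B.toContinuousBilinearMap.fderiv_of_bilinear hf hg) h

theorem fderiv_dotProduct_self_eq_zero [CharZero 𝕜] {ι : Type*} [Fintype ι]
    {f : D → ι → 𝕜} {x : D} {c : 𝕜} (hf : DifferentiableAt 𝕜 f x)
    (hc : ∀ᶠ y in 𝓝 x, f y ⬝ᵥ f y = c) (h : D) :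
    fderiv 𝕜 f x h ⬝ᵥ f x = 0 := by
  have hconst : fderiv 𝕜 (fun y => f y ⬝ᵥ f y) x h = 0 := by
    have hfc : (fun y => f y ⬝ᵥ f y) =ᶠ[𝓝 x] fun _ => c := hc
    simp [hfc.fderiv_eq]
  have hprod : fderiv 𝕜 (fun y => f y ⬝ᵥ f y) x h =
      fderiv 𝕜 f x h ⬝ᵥ f x + f x ⬝ᵥ fderiv 𝕜 f x h :=
    fderiv_bilinear_apply (dotProductBilin 𝕜 𝕜) hf hf h
  rw [hconst, dotProduct_comm (f x), eq_comm, add_self_eq_zero] at hprod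
  exact hprod

end Bilinear

section Projection

variable {u v w : Fin 3 → ℝ}

theorem dot3_eq_dotProduct (u v : Fin 3 → ℝ) : dot3 u v = u ⬝ᵥ v := rfl

theorem projPerp_add (u v w : Fin 3 → ℝ) : projPerp u (v + w) = projPerp u v + projPerp u w := by
  simp only [projPerp, dot3_eq_dotProduct, add_dotProduct, add_smul]
  abel

theorem projPerp_sub (u v w : Fin 3 → ℝ) : projPerp u (v - w) = projPerp u v - projPerp u w := by
  simp only [projPerp, dot3_eq_dotProduct, sub_dotProduct, sub_smul]
  abel

theorem projPerp_of_dot3_eq_zero (hv : dot3 v u = 0) : projPerp u v = v := by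
  simp [projPerp, hv]

theorem cross_projPerp (u v : Fin 3 → ℝ) : u ⨯₃ projPerp u v = u ⨯₃ v := by
  simp [projPerp]

theorem projPerp_cross_self (u v : Fin 3 → ℝ) : projPerp u (u ⨯₃ v) = u ⨯₃ v :=
  projPerp_of_dot3_eq_zero <| by rw [dot3_eq_dotProduct, dotProduct_comm, dot_self_cross]

theorem projPerp_eq_cross_cross (hu : dot3 u u = 1) (v : Fin 3 → ℝ) :
    projPerp u v = u ⨯₃ (v ⨯₃ u) := by
  rw [dot3_eq_dotProduct] at hu
  rw [cross_cross_eq_smul_sub_smul', hu, one_smul, projPerp, dot3_eq_dotProduct]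

theorem dot3_projPerp (hu : dot3 u u = 1) (v : Fin 3 → ℝ) : dot3 (projPerp u v) u = 0 := by
  rw [projPerp_eq_cross_cross hu, dot3_eq_dotProduct, dotProduct_comm, dot_self_cross]

theorem projPerp_cross_of_dot3_eq_zero (hu : dot3 u u = 1) (hv : dot3 v u = 0)
    (hw : dot3 w u = 0) : projPerp u (v ⨯₃ w) = 0 := by
  rw [dot3_eq_dotProduct] at hv hw
  simp [projPerp_eq_cross_cross hu, cross_cross_eq_smul_sub_smul, hv, hw]

theorem contDiffOn_projPerp {E : Type*} [NormedAddCommGroup E] [NormedSpace ℝ E]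
    {n : WithTop ℕ∞} {A : Set E} {U V : E → Fin 3 → ℝ}
    (hU : ContDiffOn ℝ n U A) (hV : ContDiffOn ℝ n V A) :
    ContDiffOn ℝ n (fun y => projPerp (U y) (V y)) A := by
  have hUi := contDiffOn_pi.1 hU
  have hVi := contDiffOn_pi.1 hV
  unfold projPerp dot3
  fun_prop

end Projection

section UnitField

variable {U X : (Fin 3 → ℝ) → (Fin 3 → ℝ)} {x : Fin 3 → ℝ}

theorem dot3_fderiv_self_eq_zero (hU : DifferentiableAt ℝ U x)
    (hUnit : ∀ᶠ y in 𝓝 x, dot3 (U y) (U y) = 1) (h : Fin 3 → ℝ) :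
    dot3 (fderiv ℝ U x h) (U x) = 0 :=
  fderiv_dotProduct_self_eq_zero hU hUnit h

theorem projPerp_bracket3 (hU : DifferentiableAt ℝ U x)
    (hUnit : ∀ᶠ y in 𝓝 x, dot3 (U y) (U y) = 1) :
    projPerp (U x) (bracket3 U X x) =
      projPerp (U x) (fderiv ℝ X x (U x)) - fderiv ℝ U x (X x) := by
  rw [bracket3, projPerp_sub,
    projPerp_of_dot3_eq_zero (dot3_fderiv_self_eq_zero hU hUnit (X x))]

theorem projPerp_fderiv_cross (hU : DifferentiableAt ℝ U x) (hX : DifferentiableAt ℝ X x)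
    (hUnit : ∀ᶠ y in 𝓝 x, dot3 (U y) (U y) = 1) (hXU : dot3 (X x) (U x) = 0) (h : Fin 3 → ℝ) :
    projPerp (U x) (fderiv ℝ (fun y => U y ⨯₃ X y) x h) = U x ⨯₃ fderiv ℝ X x h := by
  rw [fderiv_bilinear_apply crossProduct hU hX, projPerp_add, projPerp_cross_self,
    projPerp_cross_of_dot3_eq_zero hUnit.self_of_nhds (dot3_fderiv_self_eq_zero hU hUnit h) hXU,
    zero_add]

theorem projPerp_bracket3_cross_eq_iff (hU : DifferentiableAt ℝ U x) (hX : DifferentiableAt ℝ X x)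
    (hUnit : ∀ᶠ y in 𝓝 x, dot3 (U y) (U y) = 1) (hXU : dot3 (X x) (U x) = 0) :
    projPerp (U x) (bracket3 U (fun y => U y ⨯₃ X y) x) =
        U x ⨯₃ projPerp (U x) (bracket3 U X x) ↔
      fderiv ℝ U x (U x ⨯₃ X x) = U x ⨯₃ fderiv ℝ U x (X x) := by
  have hleft : projPerp (U x) (bracket3 U (fun y => U y ⨯₃ X y) x) =
      U x ⨯₃ fderiv ℝ X x (U x) - fderiv ℝ U x (U x ⨯₃ X x) := by
    rw [projPerp_bracket3 hU hUnit, projPerp_fderiv_cross hU hX hUnit hXU]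
  have hright : U x ⨯₃ projPerp (U x) (bracket3 U X x) =
      U x ⨯₃ fderiv ℝ X x (U x) - U x ⨯₃ fderiv ℝ U x (X x) := by
    rw [projPerp_bracket3 hU hUnit, map_sub, cross_projPerp]
  rw [hleft, hright, sub_right_inj]

end UnitField

theorem conformal_foliation_characterization_general {n : WithTop ℕ∞} (hn : n ≠ 0)
    {A : Set (Fin 3 → ℝ)} (hA : IsOpen A) {U : (Fin 3 → ℝ) → (Fin 3 → ℝ)}
    (hU : ContDiffOn ℝ n U A) (hUnit : ∀ x ∈ A, dot3 (U x) (U x) = 1) :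
    (∀ X : (Fin 3 → ℝ) → (Fin 3 → ℝ), ContDiffOn ℝ n X A →
        (∀ x ∈ A, dot3 (X x) (U x) = 0) →
        ∀ x ∈ A,
          projPerp (U x) (bracket3 U (fun y => U y ⨯₃ X y) x) =
            U x ⨯₃ projPerp (U x) (bracket3 U X x)) ↔
    (∀ x ∈ A, ∀ v : Fin 3 → ℝ, dot3 v (U x) = 0 →
        fderiv ℝ U x (U x ⨯₃ v) = U x ⨯₃ fderiv ℝ U x v) := by
  have pointwise (X : (Fin 3 → ℝ) → (Fin 3 → ℝ)) (hX : ContDiffOn ℝ n X A)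
      (hXU : ∀ x ∈ A, dot3 (X x) (U x) = 0) (x : Fin 3 → ℝ) (hx : x ∈ A) :
      projPerp (U x) (bracket3 U (fun y => U y ⨯₃ X y) x) =
          U x ⨯₃ projPerp (U x) (bracket3 U X x) ↔
        fderiv ℝ U x (U x ⨯₃ X x) = U x ⨯₃ fderiv ℝ U x (X x) :=
    have hxA := hA.mem_nhds hx
    projPerp_bracket3_cross_eq_iff ((hU.contDiffAt hxA).differentiableAt hn)
      ((hX.contDiffAt hxA).differentiableAt hn) (Filter.eventually_of_mem hxA hUnit) (hXU x hx)
  constructor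
  · intro hbracket x hx v hv
    have hX : ContDiffOn ℝ n (fun y => projPerp (U y) v) A :=
      contDiffOn_projPerp hU contDiffOn_const
    have hXU : ∀ y ∈ A, dot3 (projPerp (U y) v) (U y) = 0 :=
      fun y hy => dot3_projPerp (hUnit y hy) v
    have hconf := (pointwise _ hX hXU x hx).1 (hbracket _ hX hXU x hx)
    rwa [projPerp_of_dot3_eq_zero hv] at hconf
  · intro hconf X hX hXU x hx
    exact (pointwise X hX hXU x hx).2 (hconf x hx (X x) (hXU x hx))

/-- Proposition 1.1: for a smooth unit vector field `U` on an open subset of `ℝ³`, the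
vanishing of the projected Lie derivative of the rotation `J^⊥ = U × ·` along `U` is
equivalent to `(DU)ₓ(U × v) = U × (DU)ₓ(v)` for all `v ⊥ U`. -/
theorem conformal_foliation_characterization
    (A : Set (Fin 3 → ℝ)) (hA : IsOpen A)
    (U : (Fin 3 → ℝ) → (Fin 3 → ℝ))
    (hU : ContDiffOn ℝ (⊤ : ℕ∞) U A)
    (hUnit : ∀ x ∈ A, dot3 (U x) (U x) = 1) :
    (∀ X : (Fin 3 → ℝ) → (Fin 3 → ℝ), ContDiffOn ℝ (⊤ : ℕ∞) X A →
        (∀ x ∈ A, dot3 (X x) (U x) = 0) →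
        ∀ x ∈ A,
          projPerp (U x) (bracket3 U (fun y => crossProduct (U y) (X y)) x) =
            crossProduct (U x) (projPerp (U x) (bracket3 U X x))) ↔
    (∀ x ∈ A, ∀ v : Fin 3 → ℝ, dot3 v (U x) = 0 →
        fderiv ℝ U x (crossProduct (U x) v) = crossProduct (U x) (fderiv ℝ U x v)) :=
  conformal_foliation_characterization_general (by simp) hA hU hUnit
end

section
/- Let A³ be an open subset of ℝ³ (coordinates (x₁,x₂,x₃)) and let μ₀ : A³ → ℂ be real-analytic and satisfy ∂_{q̄₂}μ₀ − i·μ₀·∂₁μ₀ + μ₀²·∂_{q₂}μ₀ = 0 on A³, where ∂_{q₂} = ½(∂₂ − i∂₃) and ∂_{q̄₂} = ½(∂₂ + i∂₃). Then there exist an open set A^M ⊆ ℝ⁴ (coordinates (t,x₁,x₂,x₃)) with A^M ∩ {t = 0} = {0} × A³, and a real-analytic map μ : A^M → ℂ with μ(0,x) = μ₀(x) for all x ∈ A³, satisfying on A^M the equations ∂_vμ + i·μ·∂_{q₂}μ = 0 and ∂_{q̄₂}μ − i·μ·∂_wμ = 0, where ∂_v = ½(∂_t + ∂₁) and ∂_w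 = ½(∂₁ − ∂_t). Moreover, any two real-analytic maps satisfying these two equations on open neighbourhoods of {0} × A³ in ℝ⁴ and restricting to μ₀ on {0} × A³ agree on some open neighbourhood of {0} × A³. -/
noncomputable section

/-- Partial derivative in the `i`-th coordinate direction of a map `ℝ³ → ℂ`. -/
def pd3 (i : Fin 3) (f : (Fin 3 → ℝ) → ℂ) (x : Fin 3 → ℝ) : ℂ :=
  fderiv ℝ f x (Pi.single i 1)

/-- Partial derivative in the `i`-th coordinate direction of a map `ℝ⁴ → ℂ`;
on `ℝ⁴` the coordinates are `(t, x₁, x₂, x₃)` with `t` the coordinate of index `0`. -/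
def pd4 (i : Fin 4) (f : (Fin 4 → ℝ) → ℂ) (y : Fin 4 → ℝ) : ℂ :=
  fderiv ℝ f y (Pi.single i 1)

/-- The shear-free ray congruence equations
`∂_v μ + i μ ∂_{q₂} μ = 0` and `∂_{q̄₂} μ − i μ ∂_w μ = 0`, where
`∂_v = ½(∂_t + ∂₁)`, `∂_w = ½(∂₁ − ∂_t)`, `∂_{q₂} = ½(∂₂ − i∂₃)`, `∂_{q̄₂} = ½(∂₂ + i∂₃)`. -/
def SFREq (μ : (Fin 4 → ℝ) → ℂ) (y : Fin 4 → ℝ) : Prop :=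
  (pd4 0 μ y + pd4 1 μ y) / 2
      + Complex.I * μ y * ((pd4 2 μ y - Complex.I * pd4 3 μ y) / 2) = 0 ∧
  (pd4 2 μ y + Complex.I * pd4 3 μ y) / 2
      - Complex.I * μ y * ((pd4 1 μ y - pd4 0 μ y) / 2) = 0

/-- Inclusion of `ℝ³` as the slice `{t = 0}` of `ℝ⁴`. -/
def slice0 (x : Fin 3 → ℝ) : Fin 4 → ℝ := Fin.cons 0 x

/-!
Near a point of the slice, extend `μ₀` to a holomorphic function `M` on `ℂ³`. The first
equation says that `μ` is constant along the complex null lines of direction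
`∂_v + i μ ∂_{q₂}`, so a solution must satisfy `μ(y) = M(foot)`, where `foot` is the point at
which the line through `y` carrying the value `μ(y)` meets the complexified slice; the implicit
function theorem solves this equation for `μ`. Differentiating it turns the second equation at
`y` into the complexified foliation equation for `M` at `foot`, which holds by the identity
theorem.

The difference of two solutions of the first equation solves a linear first-order system with
analytic coefficients that is solved for the transversal derivative, so it vanishes to all orders on
the slice. Balls centred on the slice meet in convex sets which, if nonempty, meet the slice; hence
the local solutions agree on overlaps and glue.
-/

open Topology Filter

section AnalyticDerivative

variable {𝕜 E F G : Type*} [NontriviallyNormedField 𝕜] [NormedAddCommGroup E] [NormedSpace 𝕜 E]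
  [NormedAddCommGroup F] [NormedSpace 𝕜 F] [NormedAddCommGroup G] [NormedSpace 𝕜 G]

lemma analyticAt_clm_apply {A : E → F →L[𝕜] G} {f : E → F} {p : E} (hA : AnalyticAt 𝕜 A p)
    (hf : AnalyticAt 𝕜 f p) : AnalyticAt 𝕜 (fun y => A y (f y)) p :=
  ((ContinuousLinearMap.id 𝕜 (F →L[𝕜] G)).analyticAt_bilinear (A p, f p)).comp₂ hA hf

lemma analyticAt_fderiv_apply [CompleteSpace F] {f : E → F} {p : E} (hf : AnalyticAt 𝕜 f p)
    (v : E) : AnalyticAt 𝕜 (fun y => fderiv 𝕜 f y v) p :=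
  analyticAt_clm_apply hf.fderiv analyticAt_const

end AnalyticDerivative

section LinearCauchyUniqueness

variable {E F : Type*} [NormedAddCommGroup E] [NormedSpace ℝ E] [NormedAddCommGroup F]
  [NormedSpace ℝ F] {ℓ : E →L[ℝ] ℝ} {e p v : E} {f g : E → F} {k : ℕ}

/-- Vanishing to order `k` along the hyperplane `ℓ = 0` near `p`, tested on the iterated
derivatives in the transversal direction `e`. The neighbourhood of `p` may shrink with `k`. -/
def VanishesToOrder (ℓ : E →L[ℝ] ℝ) (e p : E) : ℕ → (E → F) → Prop
  | 0, _ => True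
  | k + 1, f => (∀ᶠ y in 𝓝 p, ℓ y = 0 → f y = 0) ∧
      VanishesToOrder ℓ e p k (fun y => fderiv ℝ f y e)

lemma fderiv_fderiv_apply_comm [CompleteSpace F] (hf : AnalyticAt ℝ f p) (v w : E) :
    fderiv ℝ (fun y => fderiv ℝ f y v) p w = fderiv ℝ (fun y => fderiv ℝ f y w) p v := by
  have hsymm : IsSymmSndFDerivAt ℝ f p := hf.contDiffAt.isSymmSndFDerivAt_of_omega
  have hd : DifferentiableAt ℝ (fderiv ℝ f) p := hf.fderiv.differentiableAt
  simpa [fderiv_clm_apply hd (differentiableAt_const _)] using hsymm w v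

lemma eventuallyEq_zero_of_iteratedFDeriv_diagonal [CompleteSpace F] (hf : AnalyticAt ℝ f p)
    (h : ∀ n v, iteratedFDeriv ℝ n f p (fun _ => v) = 0) : f =ᶠ[𝓝 p] 0 := by
  obtain ⟨q, r, hq⟩ := hf
  filter_upwards [hq.hasFPowerSeriesAt.eventually_hasSum_sub] with y hy
  have hterm (n : ℕ) : q n (fun _ => y - p) = 0 := by
    have hsmul := hq.factorial_smul (y - p) n
    rw [h, ← Nat.cast_smul_eq_nsmul ℝ] at hsmul
    exact (smul_eq_zero.1 hsmul).resolve_left (Nat.cast_ne_zero.2 n.factorial_ne_zero)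
  simp only [hterm] at hy
  exact hy.unique hasSum_zero

namespace VanishesToOrder

lemma congr (hfg : f =ᶠ[𝓝 p] g) (hf : VanishesToOrder ℓ e p k f) : VanishesToOrder ℓ e p k g := by
  induction k generalizing f g with
  | zero => trivial
  | succ k ih =>
    refine ⟨?_, ih (hfg.fderiv.fun_comp (· e)) hf.2⟩
    filter_upwards [hfg, hf.1] with y hy hy0 using hy ▸ hy0

lemma of_succ (hf : VanishesToOrder ℓ e p (k + 1) f) : VanishesToOrder ℓ e p k f := by
  induction k generalizing f with
  | zero => trivial
  | succ k ih => exact ⟨hf.1, ih hf.2⟩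

lemma zero : VanishesToOrder ℓ e p k (fun _ => (0 : F)) := by
  induction k with
  | zero => trivial
  | succ k ih => exact ⟨by simp, by simpa using ih⟩

variable [CompleteSpace F]

lemma add (hfa : AnalyticAt ℝ f p) (hga : AnalyticAt ℝ g p) (hf : VanishesToOrder ℓ e p k f)
    (hg : VanishesToOrder ℓ e p k g) : VanishesToOrder ℓ e p k (fun y => f y + g y) := by
  induction k generalizing f g with
  | zero => trivial
  | succ k ih =>
    refine ⟨?_, congr ?_ (ih (analyticAt_fderiv_apply hfa e) (analyticAt_fderiv_apply hga e)
      hf.2 hg.2)⟩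
    · filter_upwards [hf.1, hg.1] with y hfy hgy hy
      rw [hfy hy, hgy hy, add_zero]
    · filter_upwards [hfa.eventually_analyticAt, hga.eventually_analyticAt] with y hfy hgy
      rw [fderiv_fun_add hfy.differentiableAt hgy.differentiableAt, add_apply]

lemma sum {ι : Type*} {s : Finset ι} {u : ι → E → F} (hua : ∀ i ∈ s, AnalyticAt ℝ (u i) p)
    (hu : ∀ i ∈ s, VanishesToOrder ℓ e p k (u i)) :
    VanishesToOrder ℓ e p k (fun y => ∑ i ∈ s, u i y) := by
  classical
  induction s using Finset.induction_on with
  | empty => simpa using zero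
  | insert i s hi ih =>
    simp only [Finset.sum_insert hi, Finset.forall_mem_insert] at hua hu ⊢
    exact add hua.1 (s.analyticAt_fun_sum hua.2) hu.1 (ih hua.2 hu.2)

lemma clm_apply {G : Type*} [NormedAddCommGroup G] [NormedSpace ℝ G] [CompleteSpace G]
    {A : E → F →L[ℝ] G} (hA : AnalyticAt ℝ A p) (hfa : AnalyticAt ℝ f p)
    (hf : VanishesToOrder ℓ e p k f) : VanishesToOrder ℓ e p k (fun y => A y (f y)) := by
  induction k generalizing f A with
  | zero => trivial
  | succ k ih =>
    have hA' := analyticAt_fderiv_apply hA e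
    have hfa' := analyticAt_fderiv_apply hfa e
    refine ⟨?_, congr ?_ (add (analyticAt_clm_apply hA hfa') (analyticAt_clm_apply hA' hfa)
      (ih hA hfa' hf.2) (ih hA' hfa hf.of_succ))⟩
    · filter_upwards [hf.1] with y hfy hy
      rw [hfy hy, map_zero]
    · filter_upwards [hA.eventually_analyticAt, hfa.eventually_analyticAt] with y hAy hfy
      rw [fderiv_clm_apply hAy.differentiableAt hfy.differentiableAt]
      simp

lemma fderiv_apply_of_tangent (hv : ℓ v = 0) (hfa : AnalyticAt ℝ f p)
    (hf : VanishesToOrder ℓ e p k f) : VanishesToOrder ℓ e p k (fun y => fderiv ℝ f y v) := by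
  induction k generalizing f with
  | zero => trivial
  | succ k ih =>
    refine ⟨?_, congr ?_ (ih (analyticAt_fderiv_apply hfa e) hf.2)⟩
    · filter_upwards [hf.1.eventually_nhds, hfa.eventually_analyticAt] with y hfy hya hy
      have hline : Tendsto (fun t : ℝ => y + t • v) (𝓝 0) (𝓝 y) :=
        Continuous.tendsto' (by fun_prop) _ _ (by simp)
      have hzero : (fun t : ℝ => f (y + t • v)) =ᶠ[𝓝 0] fun _ => 0 := by
        filter_upwards [hline.eventually hfy] with t ht using ht (by simp [hy, hv])
      rw [← hya.differentiableAt.lineDeriv_eq_fderiv, lineDeriv, hzero.deriv_eq, deriv_const]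
    · filter_upwards [hfa.eventually_analyticAt] with y hy
      exact fderiv_fderiv_apply_comm hy e v

lemma fderiv_apply (he : ℓ e = 1) (hfa : AnalyticAt ℝ f p) (hf : VanishesToOrder ℓ e p (k + 1) f)
    (v : E) : VanishesToOrder ℓ e p k (fun y => fderiv ℝ f y v) := by
  have htangent : ℓ (v - ℓ v • e) = 0 := by simp [he]
  have hsplit (y : E) : fderiv ℝ f y v =
      (ℓ v • ContinuousLinearMap.id ℝ F) (fderiv ℝ f y e) + fderiv ℝ f y (v - ℓ v • e) := by
    simp
  have hfe := analyticAt_fderiv_apply hfa e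
  simp only [hsplit]
  exact add (analyticAt_clm_apply analyticAt_const hfe) (analyticAt_fderiv_apply hfa _)
    (clm_apply analyticAt_const hfe hf.2) (fderiv_apply_of_tangent htangent hfa hf.of_succ)

lemma iteratedFDeriv_diagonal (he : ℓ e = 1) (hp : ℓ p = 0) (hfa : AnalyticAt ℝ f p)
    (hf : VanishesToOrder ℓ e p (k + 1) f) (v : E) :
    iteratedFDeriv ℝ k f p (fun _ => v) = 0 := by
  induction k generalizing f with
  | zero => simpa using hf.1.self_of_nhds hp
  | succ k ih =>
    have hcomm := (ContinuousLinearMap.apply ℝ F v).iteratedFDeriv_comp_left (i := k)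
      hfa.fderiv.contDiffAt le_top
    rw [iteratedFDeriv_succ_apply_right,
      ← ih (analyticAt_fderiv_apply hfa v) (fderiv_apply he hfa hf v)]
    exact (DFunLike.congr_fun hcomm fun _ => v).symm

lemma eventuallyEq_zero (he : ℓ e = 1) (hp : ℓ p = 0) (hfa : AnalyticAt ℝ f p)
    (hf : ∀ k, VanishesToOrder ℓ e p k f) : f =ᶠ[𝓝 p] 0 :=
  eventuallyEq_zero_of_iteratedFDeriv_diagonal hfa fun n =>
    (hf (n + 1)).iteratedFDeriv_diagonal he hp hfa

end VanishesToOrder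

lemma eventuallyEq_zero_of_linear_cauchy [CompleteSpace F] {ι : Type*} {s : Finset ι} {v : ι → E}
    {A : ι → E → F →L[ℝ] F} {B : E → F →L[ℝ] F} (he : ℓ e = 1) (hp : ℓ p = 0)
    (hv : ∀ i ∈ s, ℓ (v i) = 0) (hA : ∀ i ∈ s, AnalyticAt ℝ (A i) p) (hB : AnalyticAt ℝ B p)
    (hfa : AnalyticAt ℝ f p) (hf0 : ∀ᶠ y in 𝓝 p, ℓ y = 0 → f y = 0)
    (hf : ∀ᶠ y in 𝓝 p, fderiv ℝ f y e = ∑ i ∈ s, A i y (fderiv ℝ f y (v i)) + B y (f y)) :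
    f =ᶠ[𝓝 p] 0 := by
  refine VanishesToOrder.eventuallyEq_zero he hp hfa fun k => ?_
  induction k with
  | zero => trivial
  | succ k ih =>
    refine ⟨hf0, VanishesToOrder.congr (EventuallyEq.symm hf) (.add ?_ (analyticAt_clm_apply hB hfa)
      (.sum ?_ fun i hi => ?_) (.clm_apply hB hfa ih))⟩
    · exact s.analyticAt_fun_sum fun i hi =>
        analyticAt_clm_apply (hA i hi) (analyticAt_fderiv_apply hfa _)
    · exact fun i hi => analyticAt_clm_apply (hA i hi) (analyticAt_fderiv_apply hfa _)
    · exact .clm_apply (hA i hi) (analyticAt_fderiv_apply hfa _)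
        (.fderiv_apply_of_tangent (hv i hi) hfa ih)

end LinearCauchyUniqueness

section Complexification

variable {ι F : Type*} [NormedAddCommGroup F] [NormedSpace ℂ F]

/-- The inclusion `ℝ^ι ⊆ ℂ^ι` of the real points. -/
def ofRealPi (ι : Type*) : (ι → ℝ) →L[ℝ] (ι → ℂ) :=
  ContinuousLinearMap.piMap fun _ => Complex.ofRealCLM

@[simp]
lemma ofRealPi_apply (x : ι → ℝ) (i : ι) : ofRealPi ι x i = x i := rfl

lemma ofRealPi_single [DecidableEq ι] (i : ι) (a : ℝ) :
    ofRealPi ι (Pi.single i a) = Pi.single i (a : ℂ) := by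
  ext j
  by_cases hij : j = i <;> simp [hij]

lemma fderiv_eq_fderiv_complexification [Finite ι] {M : (ι → ℂ) → F} {f : (ι → ℝ) → F} {x : ι → ℝ}
    (hM : DifferentiableAt ℂ M (ofRealPi ι x)) (h : M ∘ ofRealPi ι =ᶠ[𝓝 x] f) (v : ι → ℝ) :
    fderiv ℝ f x v = fderiv ℂ M (ofRealPi ι x) (ofRealPi ι v) := by
  cases nonempty_fintype ι
  rw [← h.fderiv_eq,
    ((hM.hasFDerivAt.restrictScalars ℝ).comp x (ofRealPi ι).hasFDerivAt).fderiv]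
  rfl

variable [Fintype ι]

section Series

variable [DecidableEq ι]

/-- The complexification of a real power series on `ℝ^ι`: the power series on `ℂ^ι` whose terms
have the same values on the standard basis. -/
def complexifySeries (p : FormalMultilinearSeries ℝ (ι → ℝ) F) :
    FormalMultilinearSeries ℂ (ι → ℂ) F := fun n =>
  ∑ c : Fin n → ι,
    ((ContinuousMultilinearMap.mkPiAlgebra ℂ (Fin n) ℂ).compContinuousLinearMap
      fun k => ContinuousLinearMap.proj (c k)).smulRight (p n fun k => Pi.single (c k) 1)

lemma complexifySeries_apply (p : FormalMultilinearSeries ℝ (ι → ℝ) F) (n : ℕ)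
    (z : Fin n → ι → ℂ) :
    complexifySeries p n z =
      ∑ c : Fin n → ι, (∏ k, z k (c k)) • p n fun k => Pi.single (c k) 1 := by
  simp [complexifySeries]

lemma complexifySeries_ofRealPi (p : FormalMultilinearSeries ℝ (ι → ℝ) F) (n : ℕ) (x : ι → ℝ) :
    (complexifySeries p n fun _ => ofRealPi ι x) = p n fun _ => x := by
  have hx : ∑ i, x i • (Pi.single i 1 : ι → ℝ) = x := by
    simpa [← Pi.single_smul'] using Finset.univ_sum_single x
  calc (complexifySeries p n fun _ => ofRealPi ι x)
      = ∑ c : Fin n → ι, p n fun k => x (c k) • Pi.single (c k) 1 := by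
        simp only [complexifySeries_apply, (p n).map_smul_univ, ofRealPi_apply,
          ← Complex.ofReal_prod, Complex.coe_smul]
    _ = p n fun _ => ∑ i, x i • Pi.single i 1 :=
        ((p n).map_sum fun _ i => x i • Pi.single i 1).symm
    _ = p n fun _ => x := by rw [hx]

lemma norm_complexifySeries_le (p : FormalMultilinearSeries ℝ (ι → ℝ) F) (n : ℕ) :
    ‖complexifySeries p n‖ ≤ Fintype.card ι ^ n * ‖p n‖ := by
  refine ContinuousMultilinearMap.opNorm_le_bound (by positivity) fun z => ?_
  have hterm (c : Fin n → ι) :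
      ‖(∏ k, z k (c k)) • p n fun k => Pi.single (c k) 1‖ ≤ (∏ k, ‖z k‖) * ‖p n‖ := by
    rw [norm_smul, norm_prod]
    gcongr with k
    · exact norm_le_pi_norm (z k) (c k)
    · simpa [Pi.norm_single] using (p n).le_opNorm fun k => (Pi.single (c k) 1 : ι → ℝ)
  rw [complexifySeries_apply]
  refine (norm_sum_le_of_le _ fun c _ => hterm c).trans_eq ?_
  simp only [Finset.sum_const, Finset.card_univ, Fintype.card_pi, Finset.prod_const,
    Fintype.card_fin, nsmul_eq_mul, Nat.cast_pow]
  ring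

lemma radius_complexifySeries_pos {p : FormalMultilinearSeries ℝ (ι → ℝ) F} (hp : 0 < p.radius) :
    0 < (complexifySeries p).radius := by
  obtain ⟨s, hs0, hs⟩ := ENNReal.lt_iff_exists_nnreal_btwn.1 hp
  obtain ⟨C, -, hC⟩ := p.norm_mul_pow_le_of_lt_radius hs
  let t : NNReal := s / (Fintype.card ι + 1)
  have ht0 : 0 < t := div_pos (by exact_mod_cast hs0) (by positivity)
  have hts : Fintype.card ι * (t : ℝ) ≤ s := by
    simp only [t]
    push_cast
    rw [mul_div_assoc', div_le_iff₀ (by positivity)]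
    nlinarith [s.coe_nonneg]
  refine lt_of_lt_of_le (by exact_mod_cast ht0)
    ((complexifySeries p).le_radius_of_bound (r := t) C fun n => ?_)
  calc ‖complexifySeries p n‖ * (t : ℝ) ^ n
      ≤ Fintype.card ι ^ n * ‖p n‖ * (t : ℝ) ^ n := by
        gcongr
        exact norm_complexifySeries_le p n
    _ = ‖p n‖ * (Fintype.card ι * (t : ℝ)) ^ n := by ring
    _ ≤ ‖p n‖ * (s : ℝ) ^ n := by gcongr
    _ ≤ C := hC n

end Series

lemma exists_analyticAt_complexification [CompleteSpace F] {f : (ι → ℝ) → F} {x : ι → ℝ}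
    (hf : AnalyticAt ℝ f x) :
    ∃ M : (ι → ℂ) → F, AnalyticAt ℂ M (ofRealPi ι x) ∧ M ∘ ofRealPi ι =ᶠ[𝓝 x] f := by
  classical
  obtain ⟨p, r, hp⟩ := hf
  have hq := ((complexifySeries p).hasFPowerSeriesOnBall
    (radius_complexifySeries_pos (hp.r_pos.trans_le hp.r_le))).comp_sub (ofRealPi ι x)
  rw [zero_add] at hq
  refine ⟨_, hq.analyticAt, ?_⟩
  filter_upwards [hp.hasFPowerSeriesAt.eventually_hasSum_sub] with y hy
  simp only [Function.comp_apply, FormalMultilinearSeries.sum, ← map_sub,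
    complexifySeries_ofRealPi, hy.tsum_eq]

lemma eqOn_zero_of_eventually_eq_zero_ofReal [CompleteSpace F] {g : ℂ → F} {U : Set ℂ}
    (hg : AnalyticOnNhd ℂ g U) (hU : IsPreconnected U) (h0 : 0 ∈ U)
    (hreal : ∀ᶠ t : ℝ in 𝓝 0, g t = 0) : Set.EqOn g 0 U := by
  have hofReal : Tendsto (fun t : ℝ => (t : ℂ)) (𝓝[≠] 0) (𝓝[≠] 0) :=
    Complex.continuous_ofReal.continuousWithinAt.tendsto_nhdsWithin fun t ht => by simpa using ht
  exact hg.eqOn_zero_of_preconnected_of_frequently_eq_zero hU h0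
    (hofReal.frequently (hreal.filter_mono nhdsWithin_le_nhds).frequently)

-- For `z` near `x`, the function `w ↦ G (Re z + w Im z)` vanishes for small real `w`, hence at `i`.
lemma eventuallyEq_zero_of_comp_ofRealPi [CompleteSpace F] {G : (ι → ℂ) → F} {x : ι → ℝ}
    (hG : AnalyticAt ℂ G (ofRealPi ι x)) (h : G ∘ ofRealPi ι =ᶠ[𝓝 x] 0) :
    G =ᶠ[𝓝 (ofRealPi ι x)] 0 := by
  obtain ⟨r, hr, hGr⟩ := Metric.eventually_nhds_iff_ball.1 hG.eventually_analyticAt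
  have hre : Tendsto (fun (z : ι → ℂ) i => (z i).re) (𝓝 (ofRealPi ι x)) (𝓝 x) :=
    Continuous.tendsto' (by fun_prop) _ _ rfl
  have hball := hre.eventually
    ((ofRealPi ι).continuous.tendsto x (Metric.ball_mem_nhds (ofRealPi ι x) hr))
  filter_upwards [Metric.ball_mem_nhds _ hr, hre.eventually h.eventually_nhds, hball]
    with z hz hzero hzre
  let u : ι → ℝ := fun i => (z i).re
  let v : ι → ℝ := fun i => (z i).im
  let γ : ℂ → ι → ℂ := fun w => w • ofRealPi ι v + ofRealPi ι u
  have hγI : γ Complex.I = z := by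
    ext i
    simp [γ, u, v, mul_comm Complex.I, add_comm]
  have hconv : Convex ℝ {w | γ w ∈ Metric.ball (ofRealPi ι x) r} :=
    (convex_ball (ofRealPi ι x) r).affine_preimage
      (((LinearMap.toSpanSingleton ℂ _ (ofRealPi ι v)).restrictScalars ℝ).toAffineMap +
        AffineMap.const ℝ ℂ (ofRealPi ι u))
  have hreal : ∀ᶠ t : ℝ in 𝓝 0, G (γ t) = 0 := by
    have ht : Tendsto (fun t : ℝ => t • v + u) (𝓝 0) (𝓝 u) :=
      Continuous.tendsto' (by fun_prop) _ _ (by simp)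
    filter_upwards [ht.eventually hzero] with t ht
    have hγt : γ t = ofRealPi ι (t • v + u) := by simp [γ]
    exact (congrArg G hγt).trans ht
  have hγ : Differentiable ℂ γ := by fun_prop
  have hγ0 : γ 0 = ofRealPi ι u := by simp [γ]
  have hGγ : G (γ Complex.I) = 0 :=
    eqOn_zero_of_eventually_eq_zero_ofReal (fun w hw => (hGr _ hw).fun_comp (hγ.analyticAt w))
      hconv.isPreconnected (hγ0 ▸ hzre :) hreal (hγI ▸ hz :)
  rwa [hγI] at hGγ

end Complexification

section Characteristics

variable {E V F : Type*} [NormedAddCommGroup E] [NormedSpace ℝ E] [NormedAddCommGroup V]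
  [NormedSpace ℝ V] {T : E →L[ℝ] ℝ} {P : E →L[ℝ] V} {X : F → V} {M : V → F} {y : E}

/-- The point where the straight characteristic through `y` carrying the value `m` meets the initial
slice: `T` is time, `P` is position and `X m` is the velocity belonging to the value `m`. -/
def footPoint (T : E →L[ℝ] ℝ) (P : E →L[ℝ] V) (X : F → V) (y : E) (m : F) : V :=
  P y - T y • X m

lemma footPoint_of_time_eq_zero (hy : T y = 0) (m : F) : footPoint T P X y m = P y := by
  simp [footPoint, hy]

variable [NormedAddCommGroup F] [NormedSpace ℝ F]

lemma analyticAt_footPoint {m : F} (hX : AnalyticAt ℝ X m) :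
    AnalyticAt ℝ (fun q : E × F => footPoint T P X q.1 q.2) (y, m) :=
  ((P.analyticAt _).fun_comp analyticAt_fst).sub
    (((T.analyticAt _).fun_comp analyticAt_fst).smul (hX.fun_comp analyticAt_snd))

lemma exists_eq_apply_footPoint [CompleteSpace E] [CompleteSpace F] (hy : T y = 0)
    (hM : AnalyticAt ℝ M (P y)) (hX : AnalyticAt ℝ X (M (P y))) :
    ∃ μ : E → F, AnalyticAt ℝ μ y ∧ ∀ᶠ z in 𝓝 y, μ z = M (footPoint T P X z (μ z)) := by
  let G : E × F → F := fun q => q.2 - M (footPoint T P X q.1 q.2)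
  let q : E × F := (y, M (P y))
  have hfoot (m : F) : footPoint T P X y m = P y := footPoint_of_time_eq_zero hy m
  have hG : AnalyticAt ℝ G q :=
    analyticAt_snd.sub (AnalyticAt.fun_comp (by rwa [hfoot]) (analyticAt_footPoint hX))
  have hpartial : fderiv ℝ G q ∘L .inr ℝ E F = ContinuousLinearMap.id ℝ F := by
    have hid : HasFDerivAt (fun m : F => G (y, m)) (ContinuousLinearMap.id ℝ F) (M (P y)) := by
      simp only [G, hfoot]
      exact (hasFDerivAt_id _).sub_const _
    exact (hG.differentiableAt.hasFDerivAt.comp (M (P y)) (hasFDerivAt_prodMk_right y _)).unique hid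
  have hinv : (fderiv ℝ G q ∘L .inr ℝ E F).IsInvertible :=
    hpartial ▸ ⟨ContinuousLinearEquiv.refl ℝ F, rfl⟩
  have hGω : ContDiffAt ℝ ⊤ G q := hG.contDiffAt
  refine ⟨hGω.implicitFunction WithTop.top_ne_zero hinv,
    (hGω.contDiffAt_implicitFunction _ hinv).analyticAt, ?_⟩
  filter_upwards [hGω.eventually_apply_implicitFunction WithTop.top_ne_zero hinv] with z hz
  exact sub_eq_zero.1 (hz.trans (by simp [G, q, hfoot]))

lemma fderiv_add_of_eq_apply_footPoint {M' : V →L[ℝ] F} {X' : F →L[ℝ] V} {μ : E → F}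
    (hM : HasFDerivAt M M' (footPoint T P X y (μ y))) (hX : HasFDerivAt X X' (μ y))
    (hμ : DifferentiableAt ℝ μ y) (h : ∀ᶠ z in 𝓝 y, μ z = M (footPoint T P X z (μ z))) (v : E) :
    fderiv ℝ μ y v + T y • M' (X' (fderiv ℝ μ y v)) = M' (P v - T v • X (μ y)) := by
  have hfoot := P.hasFDerivAt.sub (T.hasFDerivAt.smul (hX.comp y hμ.hasFDerivAt))
  have hderiv := DFunLike.congr_fun ((hM.comp y hfoot).congr_of_eventuallyEq h).fderiv v
  have hderiv' : fderiv ℝ μ y v =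
      M' (P v - (T y • X' (fderiv ℝ μ y v) + T v • X (μ y))) := by
    simpa using hderiv
  nth_rw 1 [hderiv']
  simp only [map_sub, map_add, map_smul]
  abel

end Characteristics

lemma exists_eqOn_of_pairwise_eqOn {ι α β : Type*} [Nonempty β] {S : ι → Set α} {m : ι → α → β}
    (h : ∀ i j, Set.EqOn (m i) (m j) (S i ∩ S j)) : ∃ f : α → β, ∀ i, Set.EqOn f (m i) (S i) := by
  classical
  refine ⟨fun y => if hy : ∃ i, y ∈ S i then m hy.choose y else Classical.arbitrary β,
    fun i y hy => ?_⟩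
  have hex : ∃ i, y ∈ S i := ⟨i, hy⟩
  simp only [dif_pos hex]
  exact h _ _ ⟨hex.choose_spec, hy⟩

section Minkowski

open Complex

/-- The conformal foliation equation `∂_{q̄₂} μ₀ - i μ₀ ∂₁ μ₀ + μ₀² ∂_{q₂} μ₀ = 0` at `x`. -/
def FoliationEq (μ₀ : (Fin 3 → ℝ) → ℂ) (x : Fin 3 → ℝ) : Prop :=
  (pd3 1 μ₀ x + I * pd3 2 μ₀ x) / 2 - I * μ₀ x * pd3 0 μ₀ x
    + (μ₀ x) ^ 2 * ((pd3 1 μ₀ x - I * pd3 2 μ₀ x) / 2) = 0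

/-- The first shear-free ray congruence equation `∂_v μ + i μ ∂_{q₂} μ = 0` at `y`. -/
def TransportEq (μ : (Fin 4 → ℝ) → ℂ) (y : Fin 4 → ℝ) : Prop :=
  (pd4 0 μ y + pd4 1 μ y) / 2 + I * μ y * ((pd4 2 μ y - I * pd4 3 μ y) / 2) = 0

lemma eventuallyEq_of_transportEq {f g : (Fin 4 → ℝ) → ℂ} {p : Fin 4 → ℝ} (hp : p 0 = 0)
    (hfa : AnalyticAt ℝ f p) (hga : AnalyticAt ℝ g p)
    (hf : ∀ᶠ y in 𝓝 p, TransportEq f y) (hg : ∀ᶠ y in 𝓝 p, TransportEq g y)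
    (hfg : ∀ᶠ y in 𝓝 p, y 0 = 0 → f y = g y) : f =ᶠ[𝓝 p] g := by
  -- `f - g` solves `∂₀u = -∂₁u - i f ∂₂u - f ∂₃u - i (∂₂g - i ∂₃g) u`.
  let a : Fin 3 → (Fin 4 → ℝ) → ℂ := ![fun _ => -1, fun y => -(I * f y), fun y => -f y]
  let b : (Fin 4 → ℝ) → ℂ := fun y => -(I * (pd4 2 g y - I * pd4 3 g y))
  have ha : ∀ i, AnalyticAt ℝ (a i) p := by
    simp only [Fin.forall_fin_succ]
    exact ⟨analyticAt_const, (analyticAt_const.mul hfa).neg, hfa.neg, nofun⟩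
  have hb : AnalyticAt ℝ b p :=
    (analyticAt_const.mul ((analyticAt_fderiv_apply hga _).sub
      (analyticAt_const.mul (analyticAt_fderiv_apply hga _)))).neg
  have hmul {c : (Fin 4 → ℝ) → ℂ} (hc : AnalyticAt ℝ c p) :
      AnalyticAt ℝ (fun y => ContinuousLinearMap.mul ℝ ℂ (c y)) p :=
    ((ContinuousLinearMap.mul ℝ ℂ).analyticAt _).fun_comp hc
  suffices hzero : (fun y => f y - g y) =ᶠ[𝓝 p] 0 from hzero.mono fun y => sub_eq_zero.1
  refine eventuallyEq_zero_of_linear_cauchy (ℓ := ContinuousLinearMap.proj 0)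
    (e := Pi.single 0 1) (s := Finset.univ) (v := fun i : Fin 3 => Pi.single i.succ 1)
    (by simp) hp (by simp) (fun i _ => hmul (ha i)) (hmul hb) (hfa.sub hga)
    (hfg.mono fun y hy hy0 => sub_eq_zero.2 (hy hy0)) ?_
  filter_upwards [hfa.eventually_analyticAt, hga.eventually_analyticAt, hf, hg]
    with y hfy hgy ef eg
  rw [fderiv_fun_sub hfy.differentiableAt hgy.differentiableAt]
  simp only [TransportEq, pd4] at ef eg
  simp only [Fin.sum_univ_three, a, b, pd4, ContinuousLinearMap.mul_apply', sub_apply,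
    Matrix.cons_val_zero, Matrix.cons_val_one, Matrix.cons_val, Fin.succ_zero_eq_one,
    Fin.succ_one_eq_two, Fin.reduceSucc]
  linear_combination 2 * ef - 2 * eg +
    f y * (fderiv ℝ f y (Pi.single 3 1) - fderiv ℝ g y (Pi.single 3 1)) * I_mul_I

/-- The projection `ℝ⁴ → ℝ³` forgetting time, a left inverse of `slice0`. -/
def spatialProj : (Fin 4 → ℝ) →L[ℝ] (Fin 3 → ℝ) :=
  .pi fun i => .proj i.succ

/-- The direction with `∂_t + nullDir m = 2 (∂_v + i m ∂_{q₂})`: the velocity of the complex null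
lines along which the first shear-free ray congruence equation transports the value `m`. -/
def nullDir (m : ℂ) : Fin 3 → ℂ := ![1, I * m, m]

/-- The point where the complex null line through `y` in the direction `nullDir m` meets the
complexified slice `t = 0`. -/
def nullFoot : (Fin 4 → ℝ) → ℂ → Fin 3 → ℂ :=
  footPoint (.proj 0) (ofRealPi (Fin 3) ∘L spatialProj) nullDir

/-- The direction `∂_{q̄₂} - i m ∂₁ + m² ∂_{q₂}` of the conformal foliation equation. -/
def foliationDir (m : ℂ) : Fin 3 → ℂ := ![-(I * m), (1 + m ^ 2) / 2, I * (1 - m ^ 2) / 2]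

@[simp]
lemma slice0_apply_zero (x : Fin 3 → ℝ) : slice0 x 0 = 0 := rfl

lemma slice0_spatialProj {y : Fin 4 → ℝ} (hy : y 0 = 0) : slice0 (spatialProj y) = y :=
  (congrArg (Fin.cons · (Fin.tail y)) hy.symm).trans (Fin.cons_self_tail y)

lemma dist_slice0_spatialProj_le (y : Fin 4 → ℝ) (x : Fin 3 → ℝ) :
    dist (slice0 (spatialProj y)) (slice0 x) ≤ dist y (slice0 x) := by
  refine (dist_pi_le_iff dist_nonneg).2 (Fin.cases ?_ fun i => ?_)
  · simp
  · exact dist_le_pi_dist y (slice0 x) i.succ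

lemma clm_apply_fin_three (L : (Fin 3 → ℂ) →L[ℂ] ℂ) (w : Fin 3 → ℂ) :
    L w = w 0 * L (Pi.single 0 1) + w 1 * L (Pi.single 1 1) + w 2 * L (Pi.single 2 1) := by
  have hw : w = w 0 • Pi.single 0 1 + w 1 • Pi.single 1 1 + w 2 • Pi.single 2 1 := by
    ext i
    fin_cases i <;> simp
  simpa using congrArg L hw

lemma hasDerivAt_nullDir (m : ℂ) : HasDerivAt nullDir ![0, I, 1] m := by
  rw [hasDerivAt_pi, Fin.forall_fin_succ, Fin.forall_fin_two]
  exact ⟨hasDerivAt_const m 1, hasDerivAt_const_mul I, hasDerivAt_id m⟩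

lemma differentiable_foliationDir : Differentiable ℂ foliationDir := by
  rw [differentiable_pi, Fin.forall_fin_succ, Fin.forall_fin_two]
  simp only [foliationDir, Matrix.cons_val_zero, Matrix.cons_val_succ, Matrix.cons_val_one]
  exact ⟨by fun_prop, by fun_prop, by fun_prop⟩

lemma foliationEq_iff {M : (Fin 3 → ℂ) → ℂ} {μ₀ : (Fin 3 → ℝ) → ℂ} {x : Fin 3 → ℝ}
    (hM : DifferentiableAt ℂ M (ofRealPi (Fin 3) x)) (h : M ∘ ofRealPi (Fin 3) =ᶠ[𝓝 x] μ₀) :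
    FoliationEq μ₀ x ↔
      fderiv ℂ M (ofRealPi (Fin 3) x) (foliationDir (M (ofRealPi (Fin 3) x))) = 0 := by
  simp only [FoliationEq, pd3, fderiv_eq_fderiv_complexification hM h, ← h.self_of_nhds,
    Function.comp_apply]
  rw [clm_apply_fin_three _ (foliationDir _)]
  simp only [foliationDir, ofRealPi_single, ofReal_one, Matrix.cons_val_zero, Matrix.cons_val_one,
    Matrix.cons_val]
  ring_nf

lemma eventually_fderiv_foliationDir_eq_zero {M : (Fin 3 → ℂ) → ℂ} {μ₀ : (Fin 3 → ℝ) → ℂ}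
    {x : Fin 3 → ℝ} (hM : AnalyticAt ℂ M (ofRealPi (Fin 3) x))
    (h : M ∘ ofRealPi (Fin 3) =ᶠ[𝓝 x] μ₀) (heq : ∀ᶠ y in 𝓝 x, FoliationEq μ₀ y) :
    ∀ᶠ z in 𝓝 (ofRealPi (Fin 3) x), fderiv ℂ M z (foliationDir (M z)) = 0 := by
  have hX : AnalyticAt ℂ (fun z => foliationDir (M z)) (ofRealPi (Fin 3) x) :=
    (differentiable_foliationDir.analyticAt _).fun_comp hM
  refine eventuallyEq_zero_of_comp_ofRealPi (analyticAt_clm_apply hM.fderiv hX) ?_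
  filter_upwards [(ofRealPi (Fin 3)).continuous.continuousAt.eventually hM.eventually_analyticAt,
    h.eventually_nhds, heq] with y hMy hy hfol
  exact (foliationEq_iff hMy.differentiableAt hy).1 hfol

lemma sfrEq_of_characteristic {μ : (Fin 4 → ℝ) → ℂ} {y : Fin 4 → ℝ} {L : (Fin 3 → ℂ) →L[ℂ] ℂ}
    {D : ℂ} (hD : D ≠ 0)
    (hμ : ∀ v, fderiv ℝ μ y v * D
      = L (ofRealPi (Fin 3) (spatialProj v) - v 0 • nullDir (μ y)))
    (hL : L (foliationDir (μ y)) = 0) : SFREq μ y := by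
  have hspace (i : Fin 3) : pd4 i.succ μ y * D = L (Pi.single i 1) := by
    have hi : spatialProj (Pi.single i.succ 1) = Pi.single i 1 := by
      ext j
      simp [spatialProj, Pi.single_apply]
    simp [pd4, hμ, hi, ofRealPi_single]
  have htime : pd4 0 μ y * D = -L (nullDir (μ y)) := by
    have h0 : spatialProj (Pi.single 0 1) = 0 := by
      ext j
      simp [spatialProj]
    simp [pd4, hμ, h0]
  have h₁ : pd4 1 μ y * D = L (Pi.single 0 1) := hspace 0
  have h₂ : pd4 2 μ y * D = L (Pi.single 1 1) := hspace 1
  have h₃ : pd4 3 μ y * D = L (Pi.single 2 1) := hspace 2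
  rw [clm_apply_fin_three] at htime hL
  simp only [nullDir, foliationDir, Matrix.cons_val_zero, Matrix.cons_val_one, Matrix.cons_val]
    at htime hL
  constructor <;> refine mul_right_cancel₀ hD ?_
  · linear_combination (htime + h₁ + I * μ y * (h₂ - I * h₃)) / 2
      - μ y / 2 * L (Pi.single 2 1) * I_mul_I
  · linear_combination hL + (h₂ + I * h₃) / 2 - I * μ y * (h₁ - htime) / 2
      - μ y ^ 2 / 2 * L (Pi.single 1 1) * I_mul_I

/-- The requirements, local at `y`, on an analytic extension `μ` of `μ₀` from the slice
`{0} × A` to a solution of the shear-free ray congruence equations. They include that the domain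
of `μ` meets the hyperplane `t = 0` inside `{0} × A` only. -/
structure IsSFRExtensionAt (A : Set (Fin 3 → ℝ)) (μ₀ : (Fin 3 → ℝ) → ℂ) (μ : (Fin 4 → ℝ) → ℂ)
    (y : Fin 4 → ℝ) : Prop where
  analyticAt : AnalyticAt ℝ μ y
  sfrEq : SFREq μ y
  mem_of_time_eq_zero : y 0 = 0 → spatialProj y ∈ A
  eq_of_time_eq_zero : y 0 = 0 → μ y = μ₀ (spatialProj y)

lemma SFREq.congr {μ ν : (Fin 4 → ℝ) → ℂ} {y : Fin 4 → ℝ} (hμ : SFREq μ y) (h : μ =ᶠ[𝓝 y] ν) :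
    SFREq ν y := by
  simpa only [SFREq, pd4, h.fderiv_eq, h.eq_of_nhds] using hμ

namespace IsSFRExtensionAt

variable {A : Set (Fin 3 → ℝ)} {μ₀ : (Fin 3 → ℝ) → ℂ} {μ ν : (Fin 4 → ℝ) → ℂ}

lemma congr {y : Fin 4 → ℝ} (hμ : IsSFRExtensionAt A μ₀ μ y) (h : μ =ᶠ[𝓝 y] ν) :
    IsSFRExtensionAt A μ₀ ν y where
  analyticAt := hμ.analyticAt.congr h
  sfrEq := hμ.sfrEq.congr h
  mem_of_time_eq_zero := hμ.mem_of_time_eq_zero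
  eq_of_time_eq_zero hy := h.eq_of_nhds ▸ hμ.eq_of_time_eq_zero hy

lemma eqOn_of_isPreconnected {U : Set (Fin 4 → ℝ)} {p : Fin 4 → ℝ} (hUo : IsOpen U)
    (hU : IsPreconnected U) (hpU : p ∈ U) (hp : p 0 = 0)
    (hμ : ∀ y ∈ U, IsSFRExtensionAt A μ₀ μ y) (hν : ∀ y ∈ U, IsSFRExtensionAt A μ₀ ν y) :
    Set.EqOn μ ν U := by
  have hUp : U ∈ 𝓝 p := hUo.mem_nhds hpU
  have hgerm : μ =ᶠ[𝓝 p] ν := by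
    refine eventuallyEq_of_transportEq hp (hμ p hpU).analyticAt (hν p hpU).analyticAt
      (mem_of_superset hUp fun y hy => (hμ y hy).sfrEq.1)
      (mem_of_superset hUp fun y hy => (hν y hy).sfrEq.1) ?_
    filter_upwards [hUp] with y hy hy0
    rw [(hμ y hy).eq_of_time_eq_zero hy0, (hν y hy).eq_of_time_eq_zero hy0]
  exact AnalyticOnNhd.eqOn_of_preconnected_of_eventuallyEq (fun y hy => (hμ y hy).analyticAt)
    (fun y hy => (hν y hy).analyticAt) hU hpU hgerm

lemma eqOn_ball_inter_ball {a b : Fin 3 → ℝ} {r s : ℝ}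
    (hμ : ∀ y ∈ Metric.ball (slice0 a) r, IsSFRExtensionAt A μ₀ μ y)
    (hν : ∀ y ∈ Metric.ball (slice0 b) s, IsSFRExtensionAt A μ₀ ν y) :
    Set.EqOn μ ν (Metric.ball (slice0 a) r ∩ Metric.ball (slice0 b) s) := by
  rintro y ⟨hya, hyb⟩
  have hconv := (convex_ball (slice0 a) r).inter (convex_ball (slice0 b) s)
  have hfoot : slice0 (spatialProj y) ∈ Metric.ball (slice0 a) r ∩ Metric.ball (slice0 b) s :=
    ⟨(dist_slice0_spatialProj_le y a).trans_lt hya, (dist_slice0_spatialProj_le y b).trans_lt hyb⟩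
  exact eqOn_of_isPreconnected (Metric.isOpen_ball.inter Metric.isOpen_ball) hconv.isPreconnected
    hfoot rfl (fun z hz => hμ z hz.1) (fun z hz => hν z hz.2) ⟨hya, hyb⟩

end IsSFRExtensionAt

lemma tendsto_spatialProj (x : Fin 3 → ℝ) : Tendsto spatialProj (𝓝 (slice0 x)) (𝓝 x) :=
  spatialProj.continuous.tendsto (slice0 x)

lemma sfrEq_of_eq_apply_nullFoot {M : (Fin 3 → ℂ) → ℂ} {μ : (Fin 4 → ℝ) → ℂ} {y : Fin 4 → ℝ}
    (hM : DifferentiableAt ℂ M (nullFoot y (μ y))) (hμ : DifferentiableAt ℝ μ y)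
    (h : ∀ᶠ z in 𝓝 y, μ z = M (nullFoot z (μ z)))
    (hfol : fderiv ℂ M (nullFoot y (μ y)) (foliationDir (M (nullFoot y (μ y)))) = 0)
    (hD : 1 + y 0 * fderiv ℂ M (nullFoot y (μ y)) ![0, I, 1] ≠ 0) : SFREq μ y := by
  rw [← h.self_of_nhds] at hfol
  refine sfrEq_of_characteristic hD (fun v => ?_) hfol
  have hderiv := fderiv_add_of_eq_apply_footPoint (hM.hasFDerivAt.restrictScalars ℝ)
    ((hasDerivAt_nullDir (μ y)).hasFDerivAt.restrictScalars ℝ) hμ h v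
  simp only [ContinuousLinearMap.proj_apply, ContinuousLinearMap.coe_restrictScalars',
    ContinuousLinearMap.toSpanSingleton_apply, ContinuousLinearMap.comp_apply, map_sub, map_smul,
    ContinuousLinearMap.map_smul_of_tower, smul_eq_mul, real_smul] at hderiv ⊢
  linear_combination hderiv

lemma exists_eventually_isSFRExtensionAt {A : Set (Fin 3 → ℝ)} {μ₀ : (Fin 3 → ℝ) → ℂ}
    {x : Fin 3 → ℝ} (hA : A ∈ 𝓝 x) (hμ₀ : AnalyticAt ℝ μ₀ x)
    (heq : ∀ y ∈ A, FoliationEq μ₀ y) :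
    ∃ μ, ∀ᶠ y in 𝓝 (slice0 x), IsSFRExtensionAt A μ₀ μ y := by
  obtain ⟨M, hM, hMμ₀⟩ := exists_analyticAt_complexification hμ₀
  have hfol := eventually_fderiv_foliationDir_eq_zero hM hMμ₀ (mem_of_superset hA heq)
  have hX (m : ℂ) : AnalyticAt ℝ nullDir m :=
    (Differentiable.analyticAt (fun m => (hasDerivAt_nullDir m).differentiableAt) m).restrictScalars
  obtain ⟨μ, hμ, hchar : ∀ᶠ y in 𝓝 (slice0 x), μ y = M (nullFoot y (μ y))⟩ :=
    exists_eq_apply_footPoint (T := .proj 0) (P := ofRealPi (Fin 3) ∘L spatialProj)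
      (y := slice0 x) rfl hM.restrictScalars (hX _)
  have hfoot0 : nullFoot (slice0 x) (μ (slice0 x)) = ofRealPi (Fin 3) x :=
    footPoint_of_time_eq_zero rfl _
  have hfoot : Tendsto (fun y => nullFoot y (μ y)) (𝓝 (slice0 x)) (𝓝 (ofRealPi (Fin 3) x)) :=
    hfoot0 ▸ ((analyticAt_footPoint (hX _)).comp₂ analyticAt_id hμ).continuousAt.tendsto
  have hD : ∀ᶠ y in 𝓝 (slice0 x), 1 + y 0 * fderiv ℂ M (nullFoot y (μ y)) ![0, I, 1] ≠ 0 := by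
    have htime : Tendsto (fun y : Fin 4 → ℝ => (y 0 : ℂ)) (𝓝 (slice0 x)) (𝓝 0) :=
      Continuous.tendsto' (by fun_prop) _ _ (by simp)
    have hL := (analyticAt_fderiv_apply hM ![0, I, 1]).continuousAt.tendsto.comp hfoot
    refine ((htime.mul hL).const_add 1).eventually_ne ?_
    simp
  refine ⟨μ, ?_⟩
  filter_upwards [hμ.eventually_analyticAt, hchar.eventually_nhds, hfoot.eventually hfol,
    hfoot.eventually hM.eventually_analyticAt, hD, tendsto_spatialProj x hA,
    (tendsto_spatialProj x).eventually hMμ₀] with y hμy hchary hfoly hMy hDy hyA hMμ₀y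
  have hsfr := sfrEq_of_eq_apply_nullFoot hMy.differentiableAt hμy.differentiableAt hchary hfoly hDy
  refine ⟨hμy, hsfr, fun _ => hyA, fun hy0 => ?_⟩
  have hfooty : nullFoot y (μ y) = ofRealPi (Fin 3) (spatialProj y) :=
    footPoint_of_time_eq_zero hy0 _
  rw [hchary.self_of_nhds, hfooty, ← hMμ₀y, Function.comp_apply]

lemma exists_isOpen_isSFRExtensionAt {A : Set (Fin 3 → ℝ)} (hA : IsOpen A)
    {μ₀ : (Fin 3 → ℝ) → ℂ} (hμ₀ : AnalyticOnNhd ℝ μ₀ A) (heq : ∀ x ∈ A, FoliationEq μ₀ x) :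
    ∃ U, IsOpen U ∧ slice0 '' A ⊆ U ∧ ∃ μ, ∀ y ∈ U, IsSFRExtensionAt A μ₀ μ y := by
  have hloc (a : A) : ∃ m, ∃ r > 0, ∀ y ∈ Metric.ball (slice0 a) r, IsSFRExtensionAt A μ₀ m y := by
    obtain ⟨m, hm⟩ := exists_eventually_isSFRExtensionAt (hA.mem_nhds a.2) (hμ₀ a a.2) heq
    exact ⟨m, Metric.eventually_nhds_iff_ball.1 hm⟩
  choose m r hr hm using hloc
  obtain ⟨μ, hμ⟩ := exists_eqOn_of_pairwise_eqOn fun a b =>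
    IsSFRExtensionAt.eqOn_ball_inter_ball (hm a) (hm b)
  refine ⟨⋃ a : A, Metric.ball (slice0 a) (r a), isOpen_iUnion fun _ => Metric.isOpen_ball,
    ?_, μ, fun y hy => ?_⟩
  · rintro _ ⟨x, hx, rfl⟩
    exact Set.mem_iUnion.2 ⟨⟨x, hx⟩, Metric.mem_ball_self (hr _)⟩
  · obtain ⟨a, ha⟩ := Set.mem_iUnion.1 hy
    exact (hm a y ha).congr ((hμ a).symm.eventuallyEq_of_mem (Metric.isOpen_ball.mem_nhds ha))

lemma exists_isOpen_eqOn_of_transportEq {A : Set (Fin 3 → ℝ)} (hA : IsOpen A)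
    {V₁ V₂ : Set (Fin 4 → ℝ)} {μ₁ μ₂ : (Fin 4 → ℝ) → ℂ} (hV₁ : IsOpen V₁) (hV₂ : IsOpen V₂)
    (hAV₁ : slice0 '' A ⊆ V₁) (hAV₂ : slice0 '' A ⊆ V₂) (hμ₁ : AnalyticOnNhd ℝ μ₁ V₁)
    (hμ₂ : AnalyticOnNhd ℝ μ₂ V₂) (ht₁ : ∀ y ∈ V₁, TransportEq μ₁ y)
    (ht₂ : ∀ y ∈ V₂, TransportEq μ₂ y) (h : ∀ x ∈ A, μ₁ (slice0 x) = μ₂ (slice0 x)) :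
    ∃ W, IsOpen W ∧ slice0 '' A ⊆ W ∧ W ⊆ V₁ ∩ V₂ ∧ Set.EqOn μ₁ μ₂ W := by
  refine ⟨interior {y | y ∈ V₁ ∩ V₂ ∧ μ₁ y = μ₂ y}, isOpen_interior, ?_,
    fun y hy => (interior_subset hy).1, fun y hy => (interior_subset hy).2⟩
  rintro _ ⟨x, hx, rfl⟩
  have hx₁ : slice0 x ∈ V₁ := hAV₁ ⟨x, hx, rfl⟩
  have hx₂ : slice0 x ∈ V₂ := hAV₂ ⟨x, hx, rfl⟩
  have hslice : ∀ᶠ y in 𝓝 (slice0 x), y 0 = 0 → μ₁ y = μ₂ y := by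
    filter_upwards [tendsto_spatialProj x (hA.mem_nhds hx)] with y hyA hy
    rw [← slice0_spatialProj hy, h _ hyA]
  have hgerm : μ₁ =ᶠ[𝓝 (slice0 x)] μ₂ :=
    eventuallyEq_of_transportEq rfl (hμ₁ _ hx₁) (hμ₂ _ hx₂)
      (mem_of_superset (hV₁.mem_nhds hx₁) ht₁) (mem_of_superset (hV₂.mem_nhds hx₂) ht₂) hslice
  rw [mem_interior_iff_mem_nhds]
  filter_upwards [hV₁.mem_nhds hx₁, hV₂.mem_nhds hx₂, hgerm] with y hy₁ hy₂ hy
  exact ⟨⟨hy₁, hy₂⟩, hy⟩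

end Minkowski

theorem sfr_extension_and_uniqueness_general (A3 : Set (Fin 3 → ℝ)) (hA3 : IsOpen A3)
    (μ₀ : (Fin 3 → ℝ) → ℂ) (hμ₀ : AnalyticOnNhd ℝ μ₀ A3) (heq : ∀ x ∈ A3, FoliationEq μ₀ x) :
    (∃ AM : Set (Fin 4 → ℝ), IsOpen AM ∧ AM ∩ {y | y 0 = 0} = slice0 '' A3 ∧
      ∃ μ : (Fin 4 → ℝ) → ℂ, AnalyticOnNhd ℝ μ AM ∧ (∀ x ∈ A3, μ (slice0 x) = μ₀ x) ∧
        ∀ y ∈ AM, SFREq μ y) ∧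
    ∀ (V₁ V₂ : Set (Fin 4 → ℝ)) (μ₁ μ₂ : (Fin 4 → ℝ) → ℂ), IsOpen V₁ → IsOpen V₂ →
      slice0 '' A3 ⊆ V₁ → slice0 '' A3 ⊆ V₂ → AnalyticOnNhd ℝ μ₁ V₁ → AnalyticOnNhd ℝ μ₂ V₂ →
      (∀ y ∈ V₁, TransportEq μ₁ y) → (∀ y ∈ V₂, TransportEq μ₂ y) →
      (∀ x ∈ A3, μ₁ (slice0 x) = μ₂ (slice0 x)) →
      ∃ W : Set (Fin 4 → ℝ), IsOpen W ∧ slice0 '' A3 ⊆ W ∧ W ⊆ V₁ ∩ V₂ ∧ Set.EqOn μ₁ μ₂ W := by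
  refine ⟨?_, fun _ _ _ _ hV₁ hV₂ hs₁ hs₂ ha₁ ha₂ ht₁ ht₂ hslice =>
    exists_isOpen_eqOn_of_transportEq hA3 hV₁ hV₂ hs₁ hs₂ ha₁ ha₂ ht₁ ht₂ hslice⟩
  obtain ⟨U, hU, hAU, μ, hμ⟩ := exists_isOpen_isSFRExtensionAt hA3 hμ₀ heq
  refine ⟨U, hU, subset_antisymm (fun y hy => ?_) (Set.subset_inter hAU ?_), μ,
    fun y hy => (hμ y hy).analyticAt, fun x hx => ?_, fun y hy => (hμ y hy).sfrEq⟩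
  · exact ⟨_, (hμ y hy.1).mem_of_time_eq_zero hy.2, slice0_spatialProj hy.2⟩
  · rintro _ ⟨x, -, rfl⟩
    rfl
  · exact (hμ _ (hAU ⟨x, hx, rfl⟩)).eq_of_time_eq_zero rfl

/-- Theorem 3.3 in coordinates: a real-analytic solution `μ₀` on `A³ ⊆ ℝ³` of the conformal
foliation equation extends, uniquely near the slice `{0} × A³`, to a real-analytic solution
of the shear-free ray congruence equations on a neighbourhood in Minkowski `ℝ⁴`. -/
theorem sfr_extension_and_uniqueness
    (A3 : Set (Fin 3 → ℝ)) (hA3 : IsOpen A3)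
    (μ₀ : (Fin 3 → ℝ) → ℂ) (hμ₀ : AnalyticOnNhd ℝ μ₀ A3)
    (heq : ∀ x ∈ A3,
      (pd3 1 μ₀ x + Complex.I * pd3 2 μ₀ x) / 2
        - Complex.I * μ₀ x * pd3 0 μ₀ x
        + (μ₀ x) ^ 2 * ((pd3 1 μ₀ x - Complex.I * pd3 2 μ₀ x) / 2) = 0) :
    (∃ AM : Set (Fin 4 → ℝ), IsOpen AM ∧
      AM ∩ {y | y 0 = 0} = slice0 '' A3 ∧
      ∃ μ : (Fin 4 → ℝ) → ℂ, AnalyticOnNhd ℝ μ AM ∧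
        (∀ x ∈ A3, μ (slice0 x) = μ₀ x) ∧
        (∀ y ∈ AM, SFREq μ y)) ∧
    (∀ (V₁ V₂ : Set (Fin 4 → ℝ)) (μ₁ μ₂ : (Fin 4 → ℝ) → ℂ),
      IsOpen V₁ → IsOpen V₂ → slice0 '' A3 ⊆ V₁ → slice0 '' A3 ⊆ V₂ →
      AnalyticOnNhd ℝ μ₁ V₁ → AnalyticOnNhd ℝ μ₂ V₂ →
      (∀ y ∈ V₁, SFREq μ₁ y) → (∀ y ∈ V₂, SFREq μ₂ y) →
      (∀ x ∈ A3, μ₁ (slice0 x) = μ₀ x) → (∀ x ∈ A3, μ₂ (slice0 x) = μ₀ x) →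
      ∃ W : Set (Fin 4 → ℝ), IsOpen W ∧ slice0 '' A3 ⊆ W ∧ W ⊆ V₁ ∩ V₂ ∧
        ∀ y ∈ W, μ₁ y = μ₂ y) := by
  obtain ⟨hex, huniq⟩ := sfr_extension_and_uniqueness_general A3 hA3 μ₀ hμ₀ heq
  exact ⟨hex, fun V₁ V₂ μ₁ μ₂ hV₁ hV₂ hs₁ hs₂ ha₁ ha₂ he₁ he₂ hi₁ hi₂ =>
    huniq V₁ V₂ μ₁ μ₂ hV₁ hV₂ hs₁ hs₂ ha₁ ha₂ (fun y hy => (he₁ y hy).1)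
      (fun y hy => (he₂ y hy).1) fun x hx => (hi₁ x hx).trans (hi₂ x hx).symm⟩

end
end

section
/- Let U be an open subset of ℂ⁴ and let g denote the standard symmetric complex-bilinear form g(u,v) = u₀v₀ + u₁v₁ + u₂v₂ + u₃v₃ on ℂ⁴. Let w₁, w₂ : U → ℂ⁴ be holomorphic maps such that for every x ∈ U the vectors w₁(x), w₂(x) are linearly independent over ℂ and g(wᵢ(x), wⱼ(x)) = 0 for all i, j ∈ {1,2}, so that Π_x = span_ℂ{w₁(x), w₂(x)} is a totally null 2-plane. For holomorphic F : U → ℂ⁴ and u ∈ ℂ⁴ write D_uF(x) = (DF)_x(u) (the complex Fréchet derivative applied to u). Then the following are equivalent: (i) for every x ∈ U and all i, j ∈ {1,2}, D_{wᵢ(x)}wⱼ(x) ∈ Π_x (the distribution Π is autoparallel); (ii) for every x ∈ U, [w₁,w₂](x) := D_{w₁(x)}w₂(x) − D_{w₂(x)}w₁(x) ∈ Π_x (the distribution Π is integrable). -/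
noncomputable section

/-- The standard symmetric complex-bilinear form on `ℂ⁴`. -/
def gC (u v : Fin 4 → ℂ) : ℂ := ∑ i, u i * v i

/-!
Put `T i j k = g(wₖ, D_{wᵢ} wⱼ)`. Differentiating `g(wⱼ, wₖ) = 0` shows that `T` is skew in `j, k`.
Since `Π` is its own orthogonal complement, `Π` is autoparallel iff `T = 0` and integrable iff `T`
is symmetric in `i, j`. A symbol symmetric in its first two and skew in its last two indices
vanishes, by the same computation that makes the Levi-Civita connection unique.
-/

open Module Set Submodule VectorField
open scoped Topology

theorem eq_neg_self_of_symm_of_skew {ι A : Type*} [InvolutiveNeg A] {T : ι → ι → ι → A}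
    (hsymm : ∀ i j k, T i j k = T j i k) (hskew : ∀ i j k, T i j k = -T i k j) (i j k : ι) :
    T i j k = -T i j k :=
  calc T i j k = T j i k := hsymm i j k
    _ = -T j k i := hskew j i k
    _ = -T k j i := by rw [hsymm j k i]
    _ = T k i j := by rw [hskew k j i, neg_neg]
    _ = T i k j := hsymm k i j
    _ = -T i j k := hskew i k j

section Isotropic

theorem mem_orthogonal_span_range_iff {R M ι : Type*} [CommSemiring R] [AddCommMonoid M]
    [Module R M] {B : LinearMap.BilinForm R M} {b : ι → M} {v : M} :
    v ∈ B.orthogonal (span R (range b)) ↔ ∀ i, B (b i) v = 0 := by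
  change span R (range b) ≤ LinearMap.ker (B.flip v) ↔ _
  simp [span_le, range_subset_iff]

variable {K V : Type*} [Field K] [AddCommGroup V] [Module K V] [FiniteDimensional K V]
  {B : LinearMap.BilinForm K V}

theorem orthogonal_eq_self_of_le_orthogonal (hB : B.Nondegenerate) {N : Submodule K V}
    (hle : N ≤ B.orthogonal N) (hdim : finrank K V = 2 * finrank K N) :
    B.orthogonal N = N := by
  refine (eq_of_le_of_finrank_eq hle ?_).symm
  rw [LinearMap.BilinForm.finrank_orthogonal hB]
  lia

theorem orthogonal_span_range_eq_self {ι : Type*} [Fintype ι] (hB : B.Nondegenerate) {b : ι → V}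
    (hb : LinearIndependent K b) (hnull : ∀ i j, B (b i) (b j) = 0)
    (hdim : finrank K V = 2 * Fintype.card ι) :
    B.orthogonal (span K (range b)) = span K (range b) := by
  refine orthogonal_eq_self_of_le_orthogonal hB (span_le.2 ?_) ?_
  · rintro _ ⟨j, rfl⟩
    exact mem_orthogonal_span_range_iff.2 fun i => hnull i j
  · rw [hdim, finrank_span_eq_card hb]

end Isotropic

section Derivative

variable {𝕜 D E F G : Type*} [NontriviallyNormedField 𝕜]
  [NormedAddCommGroup D] [NormedSpace 𝕜 D] [NormedAddCommGroup E] [NormedSpace 𝕜 E]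
  [NormedAddCommGroup F] [NormedSpace 𝕜 F] [NormedAddCommGroup G] [NormedSpace 𝕜 G]

theorem bilin_fderiv_add_fderiv_eq_zero (B : E →L[𝕜] F →L[𝕜] G) {f : D → E} {g : D → F} {x : D}
    (hf : DifferentiableAt 𝕜 f x) (hg : DifferentiableAt 𝕜 g x) {c : G}
    (hc : ∀ᶠ y in 𝓝 x, B (f y) (g y) = c) (u : D) :
    B (f x) (fderiv 𝕜 g x u) + B (fderiv 𝕜 f x u) (g x) = 0 := by
  have hconst : fderiv 𝕜 (fun y => B (f y) (g y)) x = 0 :=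
    (Filter.EventuallyEq.fderiv_eq hc).trans (fderiv_const_apply c)
  rw [B.fderiv_of_bilinear hf hg] at hconst
  exact DFunLike.congr_fun hconst u

end Derivative

section Frame

variable (𝕜 : Type*) {E ι : Type*} [NontriviallyNormedField 𝕜] [NormedAddCommGroup E]
  [NormedSpace 𝕜 E]

/-- The fibre at `x` of the distribution spanned by the vector fields `W i`. -/
def frameSpan (W : ι → E → E) (x : E) : Submodule 𝕜 E := span 𝕜 (range fun i => W i x)

/-- The distribution spanned by the `W i` is autoparallel at `x` for the flat connection of `E`;
it suffices to differentiate the frame fields along each other. -/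
def IsAutoparallelAt (W : ι → E → E) (x : E) : Prop :=
  ∀ i j, fderiv 𝕜 (W j) x (W i x) ∈ frameSpan 𝕜 W x

/-- The Frobenius condition at `x` for the distribution spanned by the `W i`, in terms of brackets
of frame fields. -/
def IsInvolutiveAt (W : ι → E → E) (x : E) : Prop :=
  ∀ i j, lieBracket 𝕜 (W i) (W j) x ∈ frameSpan 𝕜 W x

variable {𝕜} {W : ι → E → E} {x : E}

theorem IsAutoparallelAt.isInvolutiveAt (h : IsAutoparallelAt 𝕜 W x) : IsInvolutiveAt 𝕜 W x :=
  fun i j => sub_mem (h i j) (h j i)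

theorem isInvolutiveAt_fin_two {W : Fin 2 → E → E} :
    IsInvolutiveAt 𝕜 W x ↔ lieBracket 𝕜 (W 0) (W 1) x ∈ frameSpan 𝕜 W x := by
  have hswap : lieBracket 𝕜 (W 1) (W 0) x = -lieBracket 𝕜 (W 0) (W 1) x := lieBracket_swap
  simp [IsInvolutiveAt, Fin.forall_fin_two, hswap]

theorem frameSpan_fin_two (W : Fin 2 → E → E) (x : E) :
    frameSpan 𝕜 W x = span 𝕜 {W 0 x, W 1 x} := by
  have hrange : (range fun i => W i x) = {W 0 x, W 1 x} := by
    ext v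
    simp [Fin.exists_fin_two, eq_comm]
  rw [frameSpan, hrange]

variable [NeZero (2 : 𝕜)] {B : E →L[𝕜] E →L[𝕜] 𝕜}

theorem IsInvolutiveAt.isAutoparallelAt (h : IsInvolutiveAt 𝕜 W x) (hB : B.toBilinForm.IsSymm)
    (hW : ∀ i, DifferentiableAt 𝕜 (W i) x)
    (hnull : ∀ i j, ∀ᶠ y in 𝓝 x, B (W i y) (W j y) = 0)
    (hmax : B.toBilinForm.orthogonal (frameSpan 𝕜 W x) = frameSpan 𝕜 W x) :
    IsAutoparallelAt 𝕜 W x := by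
  have hmem {v : E} : v ∈ frameSpan 𝕜 W x ↔ ∀ k, B (W k x) v = 0 := by
    rw [← hmax]
    exact mem_orthogonal_span_range_iff
  let T (i j k : ι) : 𝕜 := B (W k x) (fderiv 𝕜 (W j) x (W i x))
  have hsymm (i j k : ι) : T i j k = T j i k := by
    have hbracket : B (W k x) (lieBracket 𝕜 (W i) (W j) x) = 0 := hmem.1 (h i j) k
    rwa [lieBracket, map_sub, sub_eq_zero] at hbracket
  have hskew (i j k : ι) : T i j k = -T i k j := by
    have hderiv := bilin_fderiv_add_fderiv_eq_zero B (hW k) (hW j) (hnull k j) (W i x)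
    have hcomm : B (fderiv 𝕜 (W k) x (W i x)) (W j x) = T i k j := hB.eq _ _
    rwa [hcomm, add_eq_zero_iff_eq_neg] at hderiv
  intro i j
  refine hmem.2 fun k => ?_
  have hneg : T i j k = -T i j k := eq_neg_self_of_symm_of_skew hsymm hskew i j k
  rw [eq_neg_iff_add_eq_zero, ← two_mul] at hneg
  exact (mul_eq_zero.1 hneg).resolve_left two_ne_zero

theorem alpha_plane_autoparallel_iff_integrable_general (hB : B.toBilinForm.IsSymm)
    (hW : ∀ i, DifferentiableAt 𝕜 (W i) x)
    (hnull : ∀ i j, ∀ᶠ y in 𝓝 x, B (W i y) (W j y) = 0)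
    (hmax : B.toBilinForm.orthogonal (frameSpan 𝕜 W x) = frameSpan 𝕜 W x) :
    IsAutoparallelAt 𝕜 W x ↔ IsInvolutiveAt 𝕜 W x :=
  ⟨fun h => h.isInvolutiveAt, fun h => h.isAutoparallelAt hB hW hnull hmax⟩

end Frame

section DotProduct

variable {R n : Type*} [CommSemiring R] [Fintype n]

theorem isSymm_dotProductBilin :
    LinearMap.BilinForm.IsSymm (dotProductBilin R R : LinearMap.BilinForm R (n → R)) :=
  ⟨dotProduct_comm⟩

theorem nondegenerate_dotProductBilin :
    LinearMap.BilinForm.Nondegenerate (dotProductBilin R R : LinearMap.BilinForm R (n → R)) :=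
  ⟨dotProduct_eq_zero, fun v h => dotProduct_eq_zero v fun w => (dotProduct_comm v w).trans (h w)⟩

end DotProduct

/-- The form `gC` as a continuous bilinear map, the shape required by the product rule. -/
def gCL : (Fin 4 → ℂ) →L[ℂ] (Fin 4 → ℂ) →L[ℂ] ℂ :=
  (dotProductBilin ℂ ℂ).toContinuousBilinearMap

theorem orthogonal_frameSpan_eq_self {W : Fin 2 → (Fin 4 → ℂ) → (Fin 4 → ℂ)} {x : Fin 4 → ℂ}
    (hindep : LinearIndependent ℂ ![W 0 x, W 1 x]) (hnull : ∀ i j, gC (W i x) (W j x) = 0) :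
    gCL.toBilinForm.orthogonal (frameSpan ℂ W x) = frameSpan ℂ W x := by
  have hW : LinearIndependent ℂ fun i => W i x := by
    rwa [← FinVec.etaExpand_eq fun i => W i x]
  exact orthogonal_span_range_eq_self nondegenerate_dotProductBilin hW hnull (by simp)

/-- Lemma 4.2: a complex-analytic distribution `Π = span{w₁, w₂}` of totally null 2-planes
on an open subset of `ℂ⁴` is autoparallel if and only if it is integrable. -/
theorem alpha_plane_autoparallel_iff_integrable
    (U : Set (Fin 4 → ℂ)) (hU : IsOpen U)
    (W : Fin 2 → (Fin 4 → ℂ) → (Fin 4 → ℂ))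
    (hhol : ∀ i, DifferentiableOn ℂ (W i) U)
    (hindep : ∀ x ∈ U, LinearIndependent ℂ ![W 0 x, W 1 x])
    (hnull : ∀ x ∈ U, ∀ i j : Fin 2, gC (W i x) (W j x) = 0) :
    (∀ x ∈ U, ∀ i j : Fin 2,
        fderiv ℂ (W j) x (W i x) ∈ Submodule.span ℂ {W 0 x, W 1 x}) ↔
    (∀ x ∈ U,
        fderiv ℂ (W 1) x (W 0 x) - fderiv ℂ (W 0) x (W 1 x) ∈
          Submodule.span ℂ {W 0 x, W 1 x}) := by
  refine forall₂_congr fun x hx => ?_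
  have hUx : U ∈ 𝓝 x := hU.mem_nhds hx
  simpa only [isInvolutiveAt_fin_two, IsAutoparallelAt, frameSpan_fin_two, lieBracket] using
    alpha_plane_autoparallel_iff_integrable_general (B := gCL) isSymm_dotProductBilin
      (fun i => (hhol i).differentiableAt hUx)
      (fun i j => Filter.eventually_of_mem hUx fun y hy => hnull y hy i j)
      (orthogonal_frameSpan_eq_self (hindep x hx) (hnull x hx))

end
end

section
/- Let A be a connected open subset of ℂ⁴ and μ : A → ℂ holomorphic. Let ι : ℝ⁴ → ℂ⁴ be the inclusion of real points and assume A_ℝ = {x ∈ ℝ⁴ : ι(x) ∈ A} is non-empty. Suppose the restriction ν = μ∘ι satisfies on A_ℝ the equations ∂_{q̄₁}ν − ν·∂_{q₂}ν = 0 and ∂_{q̄₂}ν + ν·∂_{q₁}ν = 0, where in the real coordinates (x₀,x₁,x₂,x₃): ∂_{q₁} = ½(∂₀ − i∂₁), ∂_{q̄₁} = ½(∂₀ + i∂₁), ∂_{q₂} = ½(∂₂ − i∂₃), ∂_{q̄₂} = ½(∂₂ + i∂₃). Then μ satisfies on all of A the equations ∂_{q̃₁}μ − μ·∂_{q₂}μ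 = 0 and ∂_{q̃₂}μ + μ·∂_{q₁}μ = 0, where now ∂_{q₁} = ½(∂_{z₀} − i∂_{z₁}), ∂_{q̃₁} = ½(∂_{z₀} + i∂_{z₁}), ∂_{q₂} = ½(∂_{z₂} − i∂_{z₃}), ∂_{q̃₂} = ½(∂_{z₂} + i∂_{z₃}) are complex partial derivatives on ℂ⁴. -/
noncomputable section

/-- Real partial derivative in the `i`-th coordinate direction of a map `ℝ⁴ → ℂ`. -/
def pdR (i : Fin 4) (f : (Fin 4 → ℝ) → ℂ) (x : Fin 4 → ℝ) : ℂ :=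
  fderiv ℝ f x (Pi.single i 1)

/-- Complex partial derivative in the `i`-th coordinate direction of a map `ℂ⁴ → ℂ`. -/
def pdC (i : Fin 4) (f : (Fin 4 → ℂ) → ℂ) (z : Fin 4 → ℂ) : ℂ :=
  fderiv ℂ f z (Pi.single i 1)

/-- The inclusion of the real points `ℝ⁴ ↪ ℂ⁴`. -/
def iotaR (x : Fin 4 → ℝ) : Fin 4 → ℂ := fun i => (x i : ℂ)

/-!
A bounded holomorphic map differs from its linear part by a quadratic error that is uniform in the
base point, so its difference quotients converge locally uniformly and, by Weierstrass' theorem, its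
directional derivatives are holomorphic. On real points the complex partial derivatives of `μ` are
the real ones of its restriction, so the left-hand sides of the equations form a holomorphic map on
`A` vanishing on an open set of real points. A complex point is `x + i y` with `x`, `y` real; the
map `t ↦ x + t y` sends small real `t` to real points, so the one-variable identity theorem gives
vanishing at `t = i`, hence near a real point and, by connectedness, on all of `A`.
-/

open Filter Topology Metric Complex Set

section CauchyEstimates

variable {E F ι : Type*} [NormedAddCommGroup E] [NormedSpace ℂ E] [NormedAddCommGroup F]
  [NormedSpace ℂ F] {A : Set E} {c : E} {r R C : ℝ} {p : Filter ι}

lemma norm_fderiv_le_of_forall_mem_ball_norm_le {f : E → F} (hR : 0 < R)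
    (hf : DifferentiableOn ℂ f (ball c R)) (hC : ∀ z ∈ ball c R, ‖f z‖ ≤ C) :
    ‖fderiv ℂ f c‖ ≤ 2 * C / R := by
  refine norm_fderiv_le_div_of_mapsTo_ball hf (fun z hz ↦ ?_) hR
  rw [mem_closedBall, dist_eq_norm]
  linarith [norm_sub_le (f z) (f c), hC z hz, hC c (mem_ball_self hR)]

lemma norm_sub_sub_fderiv_le_of_mapsTo_ball {f : E → F} {z : E}
    (hf : DifferentiableOn ℂ f (ball c R)) (hC : MapsTo f (ball c R) (closedBall (f c) C))
    (hz : z ∈ ball c R) :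
    ‖f z - f c - fderiv ℂ f c (z - c)‖ ≤ 2 * C * (‖z - c‖ / R) ^ 2 := by
  have hR : 0 < R := pos_of_mem_ball hz
  have hfc : HasFDerivAt f (fderiv ℂ f c) c :=
    (hf.differentiableAt (ball_mem_nhds c hR)).hasFDerivAt
  have hfderiv : ∀ w ∈ ball c R, ‖fderiv ℂ f c (w - c)‖ ≤ C := fun w hw ↦ by
    have hw' : ‖w - c‖ ≤ R := (mem_ball_iff_norm.1 hw).le
    calc ‖fderiv ℂ f c (w - c)‖ ≤ C / R * R :=
          (fderiv ℂ f c).le_of_opNorm_le_of_le (norm_fderiv_le_div_of_mapsTo_ball hf hC hR) hw'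
      _ = C := div_mul_cancel₀ C hR.ne'
  -- Schwarz's lemma of order two applies to `f` minus its linear part at `c`.
  have key := dist_le_mul_div_pow_of_mapsTo_ball_of_isLittleO (R₂ := 2 * C) (n := 1)
    (f := fun w ↦ f w - fderiv ℂ f c (w - c)) (by fun_prop)
    (fun w hw ↦ ?_) ?_ hz
  · simpa [dist_eq_norm, sub_right_comm] using key
  · have hfw := mem_closedBall_iff_norm.1 (hC hw)
    rw [mem_closedBall_iff_norm]
    calc ‖f w - fderiv ℂ f c (w - c) - (f c - fderiv ℂ f c (c - c))‖
        = ‖f w - f c - fderiv ℂ f c (w - c)‖ := by simp [sub_right_comm]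
      _ ≤ 2 * C := by linarith [norm_sub_le (f w - f c) (fderiv ℂ f c (w - c)), hfderiv w hw]
  · simpa [sub_right_comm] using hfc.isLittleO.norm_right

lemma tendstoUniformlyOn_fderiv_zero {f : ι → E → F}
    (hd : ∀ᶠ i in p, DifferentiableOn ℂ (f i) (ball c R))
    (hf : TendstoUniformlyOn f 0 p (ball c R)) (hrR : r < R) :
    TendstoUniformlyOn (fun i ↦ fderiv ℂ (f i)) 0 p (ball c r) := by
  rw [Metric.tendstoUniformlyOn_iff] at hf ⊢
  intro ε hε
  have hδ : 0 < R - r := sub_pos.2 hrR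
  filter_upwards [hd, hf (ε * (R - r) / 4) (by positivity)] with i hdi hfi z hz
  have hsub : ball z (R - r) ⊆ ball c R := ball_subset_ball' (by linarith [mem_ball.1 hz])
  have hbound := norm_fderiv_le_of_forall_mem_ball_norm_le hδ (hdi.mono hsub)
    (fun w hw ↦ by simpa using (hfi w (hsub hw)).le)
  calc dist ((0 : E → E →L[ℂ] F) z) (fderiv ℂ (f i) z)
      ≤ 2 * (ε * (R - r) / 4) / (R - r) := by simpa using hbound
    _ = ε / 2 := by field_simp; norm_num
    _ < ε := half_lt_self hε

lemma uniformCauchySeqOn_fderiv {f : ι → E → F}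
    (hd : ∀ᶠ i in p, DifferentiableOn ℂ (f i) (ball c R))
    (hf : UniformCauchySeqOn f p (ball c R)) (hrR : r < R) :
    UniformCauchySeqOn (fun i ↦ fderiv ℂ (f i)) p (ball c r) := by
  rw [SeminormedAddGroup.uniformCauchySeqOn_iff_tendstoUniformlyOn_zero] at hf ⊢
  have hdd : ∀ᶠ m : ι × ι in p ×ˢ p,
      DifferentiableOn ℂ (f m.1) (ball c R) ∧ DifferentiableOn ℂ (f m.2) (ball c R) :=
    hd.prod_mk hd
  refine (tendstoUniformlyOn_fderiv_zero
    (hdd.mono fun m hm ↦ hm.1.fun_neg.fun_add hm.2) hf hrR).congr ?_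
  filter_upwards [hdd] with m hm z hz
  have hz' : ball c R ∈ 𝓝 z := isOpen_ball.mem_nhds (ball_subset_ball hrR.le hz)
  rw [fderiv_fun_add (hm.1.differentiableAt hz').fun_neg (hm.2.differentiableAt hz'),
    fderiv_fun_neg]

lemma differentiableAt_of_tendstoUniformlyOn_ball [CompleteSpace F] [p.NeBot]
    {f : ι → E → F} {g : E → F} (hR : 0 < R)
    (hd : ∀ᶠ i in p, DifferentiableOn ℂ (f i) (ball c R))
    (hf : TendstoUniformlyOn f g p (ball c R)) :
    DifferentiableAt ℂ g c := by
  have hcauchy := uniformCauchySeqOn_fderiv hd hf.uniformCauchySeqOn (half_lt_self hR)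
  choose! g' hg' using fun z (hz : z ∈ ball c (R / 2)) ↦
    CompleteSpace.complete (hcauchy.cauchy_map hz)
  have hball : ball c (R / 2) ∈ 𝓝 c := ball_mem_nhds c (half_pos hR)
  have hunif : TendstoUniformlyOnFilter (fun i ↦ fderiv ℂ (f i)) g' p (𝓝 c) :=
    (hcauchy.tendstoUniformlyOn_of_tendsto hg').tendstoUniformlyOnFilter.mono_right
      (le_principal_iff.2 hball)
  refine (hasFDerivAt_of_tendstoUniformlyOnFilter (f := f) hunif ?_ ?_).differentiableAt
  · filter_upwards [hd.prod_mk (ball_mem_nhds c hR |> eventually_mem_nhds_iff.2)] with y hy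
    exact (hy.1.differentiableAt hy.2).hasFDerivAt
  · filter_upwards [ball_mem_nhds c hR] with z hz
    exact hf.tendsto_at hz

lemma tendstoUniformlyOn_differenceQuotient {f : E → F} (v : E) (hR : 0 < R)
    (hf : DifferentiableOn ℂ f (ball c (R + R)))
    (hC : ∀ z ∈ ball c (R + R), ‖f z‖ ≤ C) :
    TendstoUniformlyOn (fun (t : ℂ) z ↦ t⁻¹ • (f (z + t • v) - f z))
      (fun z ↦ fderiv ℂ f z v) (𝓝[≠] 0) (ball c R) := by
  have hlim : Tendsto (fun t : ℂ ↦ ‖t‖ * (2 * (2 * C) * (‖v‖ / R) ^ 2)) (𝓝[≠] 0) (𝓝 0) :=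
    (Continuous.tendsto' (by fun_prop) 0 0 (by simp)).mono_left nhdsWithin_le_nhds
  have hsmall : ∀ᶠ t : ℂ in 𝓝[≠] 0, ‖t • v‖ < R :=
    nhdsWithin_le_nhds ((Continuous.tendsto' (by fun_prop) 0 0 (by simp)).eventually_lt_const hR)
  rw [Metric.tendstoUniformlyOn_iff]
  intro ε hε
  filter_upwards [hlim.eventually_lt_const hε, hsmall, self_mem_nhdsWithin] with t htε htR ht0 z hz
  have hsub : ball z R ⊆ ball c (R + R) := ball_subset_ball' (by linarith [mem_ball.1 hz])
  have hmaps : MapsTo f (ball z R) (closedBall (f z) (2 * C)) := fun w hw ↦ by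
    rw [mem_closedBall_iff_norm]
    linarith [norm_sub_le (f w) (f z), hC w (hsub hw), hC z (hsub (mem_ball_self hR))]
  have hrem := norm_sub_sub_fderiv_le_of_mapsTo_ball (hf.mono hsub) hmaps
    (z := z + t • v) (by simpa using htR)
  rw [add_sub_cancel_left, map_smul] at hrem
  have ht0' : t ≠ 0 := ht0
  rw [dist_comm, dist_eq_norm]
  calc ‖t⁻¹ • (f (z + t • v) - f z) - fderiv ℂ f z v‖
      = ‖t⁻¹ • (f (z + t • v) - f z - t • fderiv ℂ f z v)‖ := by
        rw [smul_sub _ (_ - _), inv_smul_smul₀ ht0']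
    _ = ‖t‖⁻¹ * ‖f (z + t • v) - f z - t • fderiv ℂ f z v‖ := by rw [norm_smul, norm_inv]
    _ ≤ ‖t‖⁻¹ * (2 * (2 * C) * (‖t • v‖ / R) ^ 2) := by gcongr
    _ = ‖t‖ * (2 * (2 * C) * (‖v‖ / R) ^ 2) := by
        have : ‖t‖ ≠ 0 := norm_ne_zero_iff.2 ht0'
        rw [norm_smul]; field_simp
    _ < ε := htε

lemma differentiableOn_fderiv_apply [CompleteSpace F] {f : E → F} (hA : IsOpen A)
    (hf : DifferentiableOn ℂ f A) (v : E) :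
    DifferentiableOn ℂ (fun z ↦ fderiv ℂ f z v) A := by
  intro z hz
  have hbounded : ∀ᶠ w in 𝓝 z, w ∈ A ∧ ‖f w‖ < ‖f z‖ + 1 :=
    (hA.eventually_mem hz).and
      ((hf.continuousOn.continuousAt (hA.mem_nhds hz)).norm.eventually_lt_const (lt_add_one _))
  obtain ⟨r, hr, hball⟩ := Metric.eventually_nhds_iff_ball.1 hbounded
  obtain ⟨R, rfl⟩ : ∃ R, r = R + R := ⟨r / 2, (add_halves r).symm⟩
  have hR : 0 < R := by linarith
  have hfball : DifferentiableOn ℂ f (ball z (R + R)) := hf.mono fun w hw ↦ (hball w hw).1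
  have hslope := tendstoUniformlyOn_differenceQuotient v hR hfball fun w hw ↦ (hball w hw).2.le
  have hsmall : ∀ᶠ t : ℂ in 𝓝[≠] 0, ‖t • v‖ < R :=
    nhdsWithin_le_nhds ((Continuous.tendsto' (by fun_prop) 0 0 (by simp)).eventually_lt_const hR)
  refine (differentiableAt_of_tendstoUniformlyOn_ball hR ?_ hslope).differentiableWithinAt
  filter_upwards [hsmall] with t ht
  have hshift : MapsTo (fun w ↦ w + t • v) (ball z R) (ball z (R + R)) := fun w hw ↦ by
    rw [mem_ball_iff_norm] at hw ⊢
    calc ‖w + t • v - z‖ = ‖(w - z) + t • v‖ := by rw [add_sub_right_comm]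
      _ < R + R := (norm_add_le _ _).trans_lt (add_lt_add hw ht)
  have hid : ball z R ⊆ ball z (R + R) := ball_subset_ball (by linarith)
  exact ((hfball.comp (by fun_prop) hshift).sub (hfball.mono hid)).const_smul t⁻¹

end CauchyEstimates

section IdentityTheorem

variable {E F : Type*} [NormedAddCommGroup E] [NormedSpace ℂ E] [NormedAddCommGroup F]
  [NormedSpace ℂ F] [CompleteSpace F] {A S : Set E} {f : E → F}

lemma eq_zero_of_frequently_eq_zero_on_line (hS : IsOpen S) (hconv : Convex ℝ S)
    (hf : DifferentiableOn ℂ f S) {w v : E} (hw : w ∈ S)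
    (hfreq : ∃ᶠ t in 𝓝[≠] (0 : ℂ), f (w + t • v) = 0) {t : ℂ} (ht : w + t • v ∈ S) :
    f (w + t • v) = 0 := by
  let T : Set ℂ := (fun t : ℂ ↦ w + t • v) ⁻¹' S
  have hT : IsOpen T := hS.preimage (by fun_prop)
  have hTconv : Convex ℝ T := (hconv.translate_preimage_right w).linear_preimage
    ((LinearMap.toSpanSingleton ℂ E v).restrictScalars ℝ)
  have hfT : DifferentiableOn ℂ (fun t : ℂ ↦ f (w + t • v)) T :=
    hf.comp (by fun_prop) (mapsTo_preimage _ S)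
  have h0 : (0 : ℂ) ∈ T := by simpa [T] using hw
  exact (hfT.analyticOnNhd hT).eqOn_zero_of_preconnected_of_frequently_eq_zero
    hTconv.isPreconnected h0 hfreq ht

lemma eqOn_zero_of_isPreconnected_of_eventuallyEq_zero (hA : IsOpen A) (hconn : IsPreconnected A)
    (hf : DifferentiableOn ℂ f A) {z₀ : E} (hz₀ : z₀ ∈ A) (hfz₀ : f =ᶠ[𝓝 z₀] 0) :
    EqOn f 0 A := by
  suffices A ⊆ {z | f =ᶠ[𝓝 z] 0} from fun z hz ↦ (this hz).self_of_nhds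
  refine hconn.subset_of_closure_inter_subset isOpen_setOfPred_eventually_nhds ⟨z₀, hz₀, hfz₀⟩ ?_
  rintro c ⟨hc, hcA⟩
  obtain ⟨r, hr, hball⟩ := Metric.isOpen_iff.1 hA c hcA
  obtain ⟨w, hw, hcw⟩ := Metric.mem_closure_iff.1 hc r hr
  filter_upwards [ball_mem_nhds c hr] with z hz
  have hline : Tendsto (fun t : ℂ ↦ w + t • (z - w)) (𝓝[≠] 0) (𝓝 w) :=
    (Continuous.tendsto' (by fun_prop) 0 w (by simp)).mono_left nhdsWithin_le_nhds
  simpa using eq_zero_of_frequently_eq_zero_on_line isOpen_ball (convex_ball c r)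
    (hf.mono hball) (mem_ball'.2 hcw) (hline.eventually hw).frequently (t := 1) (by simpa using hz)

end IdentityTheorem

section RealPoints

variable {ι F H : Type*} [Finite ι] [NormedAddCommGroup F] [NormedSpace ℂ F]
  [NormedAddCommGroup H] [NormedSpace ℂ H] [CompleteSpace H] {A : Set (ι → ℂ)} {x₀ : ι → ℝ}

lemma frequently_nhdsNE_zero_ofReal {P : ℂ → Prop} (h : ∀ᶠ t : ℝ in 𝓝 0, P t) :
    ∃ᶠ t in 𝓝[≠] (0 : ℂ), P t := by
  have hofReal : Tendsto ofReal (𝓝[≠] 0) (𝓝[≠] 0) :=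
    tendsto_nhdsWithin_iff.2
      ⟨(continuous_ofReal.tendsto' 0 0 ofReal_zero).mono_left nhdsWithin_le_nhds,
        eventually_mem_nhdsWithin.mono fun _ ht ↦ ofReal_ne_zero.2 ht⟩
  exact hofReal.frequently (h.filter_mono nhdsWithin_le_nhds).frequently

lemma eventuallyEq_zero_of_eventually_ofReal {f : (ι → ℂ) → H} (hA : IsOpen A)
    (hf : DifferentiableOn ℂ f A) (hx₀ : ofReal ∘ x₀ ∈ A)
    (hreal : ∀ᶠ x in 𝓝 x₀, f (ofReal ∘ x) = 0) : f =ᶠ[𝓝 (ofReal ∘ x₀)] 0 := by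
  cases nonempty_fintype ι
  obtain ⟨r, hr, hball⟩ := Metric.isOpen_iff.1 hA _ hx₀
  have hre : Tendsto (fun z : ι → ℂ ↦ re ∘ z) (𝓝 (ofReal ∘ x₀)) (𝓝 x₀) :=
    Continuous.tendsto' (by fun_prop) _ _ (by ext; simp)
  have hreal' : ∀ᶠ x in 𝓝 x₀,
      ofReal ∘ x ∈ ball (ofReal ∘ x₀) r ∧ ∀ᶠ y in 𝓝 x, f (ofReal ∘ y) = 0 :=
    (Continuous.tendsto' (by fun_prop) _ _ rfl |>.eventually_mem (ball_mem_nhds _ hr)).and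
      hreal.eventually_nhds
  filter_upwards [ball_mem_nhds _ hr, hre.eventually hreal'] with z hz ⟨hx, hfx⟩
  have hz_eq : ofReal ∘ re ∘ z + I • (ofReal ∘ im ∘ z) = z := by
    ext i
    simp [mul_comm I, re_add_im]
  have hline : ∀ᶠ t : ℝ in 𝓝 0, f (ofReal ∘ re ∘ z + (t : ℂ) • (ofReal ∘ im ∘ z)) = 0 := by
    have : Tendsto (fun t : ℝ ↦ re ∘ z + t • (im ∘ z)) (𝓝 0) (𝓝 (re ∘ z)) :=
      Continuous.tendsto' (by fun_prop) _ _ (by simp)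
    filter_upwards [this.eventually hfx] with t ht
    convert ht using 2
    ext i
    simp
  rw [← hz_eq] at hz ⊢
  exact eq_zero_of_frequently_eq_zero_on_line isOpen_ball (convex_ball _ r) (hf.mono hball) hx
    (frequently_nhdsNE_zero_ofReal hline) hz

lemma fderiv_comp_ofReal_apply {f : (ι → ℂ) → F} {x : ι → ℝ}
    (hf : DifferentiableAt ℂ f (ofReal ∘ x)) (v : ι → ℝ) :
    fderiv ℝ (fun y ↦ f (ofReal ∘ y)) x v = fderiv ℂ f (ofReal ∘ x) (ofReal ∘ v) := by
  cases nonempty_fintype ι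
  let L : (ι → ℝ) →L[ℝ] (ι → ℂ) := .pi fun i ↦ ofRealCLM.comp (.proj i)
  have hL : HasFDerivAt (fun y : ι → ℝ ↦ ofReal ∘ y) L x := L.hasFDerivAt
  exact DFunLike.congr_fun ((hf.hasFDerivAt.restrictScalars ℝ).comp x hL).fderiv v

lemma firstOrder_relation_of_eventually_ofReal [DecidableEq ι] [CompleteSpace F]
    {f : (ι → ℂ) → F} {P : F × (ι → F) → H} (hA : IsOpen A) (hconn : IsPreconnected A)
    (hf : DifferentiableOn ℂ f A) (hP : Differentiable ℂ P) (hx₀ : ofReal ∘ x₀ ∈ A)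
    (hreal : ∀ᶠ x in 𝓝 x₀, P (f (ofReal ∘ x),
      fun i ↦ fderiv ℝ (fun y ↦ f (ofReal ∘ y)) x (Pi.single i 1)) = 0) :
    ∀ z ∈ A, P (f z, fun i ↦ fderiv ℂ f z (Pi.single i 1)) = 0 := by
  cases nonempty_fintype ι
  have hjet : DifferentiableOn ℂ (fun z ↦ P (f z, fun i ↦ fderiv ℂ f z (Pi.single i 1))) A :=
    hP.comp_differentiableOn (hf.prodMk (differentiableOn_pi.2 fun i ↦
      differentiableOn_fderiv_apply hA hf (Pi.single i 1)))
  refine eqOn_zero_of_isPreconnected_of_eventuallyEq_zero hA hconn hjet hx₀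
    (eventuallyEq_zero_of_eventually_ofReal hA hjet hx₀ ?_)
  have hxA : ∀ᶠ x in 𝓝 x₀, ofReal ∘ x ∈ A :=
    (hA.preimage (by fun_prop : Continuous fun x : ι → ℝ ↦ ofReal ∘ x)).eventually_mem hx₀
  filter_upwards [hreal, hxA] with x hx hxA
  have hsingle (i : ι) : ofReal ∘ (Pi.single i 1 : ι → ℝ) = Pi.single i 1 := by
    ext j
    simp [Pi.single_apply, apply_ite ofReal]
  simpa only [fderiv_comp_ofReal_apply (hf.differentiableAt (hA.mem_nhds hxA)), hsingle] using hx

end RealPoints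

/-- The left-hand sides of the two integrability equations, as functions of the value `u` and of
the partial derivatives `p` of the unknown map. The same polynomial serves the equations on `ℝ⁴`
and those on `ℂ⁴`. -/
def integrabilityDefect (u : ℂ) (p : Fin 4 → ℂ) : ℂ × ℂ :=
  ((p 0 + I * p 1) / 2 - u * ((p 2 - I * p 3) / 2),
    (p 2 + I * p 3) / 2 + u * ((p 0 - I * p 1) / 2))

lemma differentiable_integrabilityDefect :
    Differentiable ℂ fun q : ℂ × (Fin 4 → ℂ) ↦ integrabilityDefect q.1 q.2 := by
  unfold integrabilityDefect
  fun_prop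

theorem hermitian_integrability_extends_to_alpha_planes_general {A : Set (Fin 4 → ℂ)}
    (hA : IsOpen A) (hconn : IsPreconnected A) {μ : (Fin 4 → ℂ) → ℂ}
    (hμ : DifferentiableOn ℂ μ A) {x₀ : Fin 4 → ℝ} (hx₀ : iotaR x₀ ∈ A)
    (hreal : ∀ᶠ x in 𝓝 x₀,
      integrabilityDefect (μ (iotaR x)) (fun i ↦ pdR i (μ ∘ iotaR) x) = 0) :
    ∀ z ∈ A, integrabilityDefect (μ z) (fun i ↦ pdC i μ z) = 0 :=
  firstOrder_relation_of_eventually_ofReal hA hconn hμ differentiable_integrabilityDefect hx₀ hreal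

/-- Proposition 5.2 (one implication, in coordinates): if a holomorphic `μ` on a connected
open subset `A ⊆ ℂ⁴` restricts on the real points to a map representing an integrable
Hermitian structure, then `μ` satisfies the `α`-plane integrability equations on all of `A`. -/
theorem hermitian_integrability_extends_to_alpha_planes
    (A : Set (Fin 4 → ℂ)) (hA : IsOpen A) (hconn : IsConnected A)
    (μ : (Fin 4 → ℂ) → ℂ) (hμ : DifferentiableOn ℂ μ A)
    (hne : {x : Fin 4 → ℝ | iotaR x ∈ A}.Nonempty)
    (heq1 : ∀ x : Fin 4 → ℝ, iotaR x ∈ A →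
      (pdR 0 (μ ∘ iotaR) x + Complex.I * pdR 1 (μ ∘ iotaR) x) / 2
        - μ (iotaR x) * ((pdR 2 (μ ∘ iotaR) x - Complex.I * pdR 3 (μ ∘ iotaR) x) / 2) = 0)
    (heq2 : ∀ x : Fin 4 → ℝ, iotaR x ∈ A →
      (pdR 2 (μ ∘ iotaR) x + Complex.I * pdR 3 (μ ∘ iotaR) x) / 2
        + μ (iotaR x) * ((pdR 0 (μ ∘ iotaR) x - Complex.I * pdR 1 (μ ∘ iotaR) x) / 2) = 0) :
    ∀ z ∈ A,
      (pdC 0 μ z + Complex.I * pdC 1 μ z) / 2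
        - μ z * ((pdC 2 μ z - Complex.I * pdC 3 μ z) / 2) = 0 ∧
      (pdC 2 μ z + Complex.I * pdC 3 μ z) / 2
        + μ z * ((pdC 0 μ z - Complex.I * pdC 1 μ z) / 2) = 0 := by
  obtain ⟨x₀, hx₀⟩ := hne
  have hcont : Continuous iotaR := by unfold iotaR; fun_prop
  have hreal : ∀ᶠ x in 𝓝 x₀,
      integrabilityDefect (μ (iotaR x)) (fun i ↦ pdR i (μ ∘ iotaR) x) = 0 := by
    filter_upwards [(hA.preimage hcont).eventually_mem hx₀] with x hx
    exact Prod.ext (heq1 x hx) (heq2 x hx)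
  intro z hz
  exact Prod.ext_iff.1 (hermitian_integrability_extends_to_alpha_planes_general hA
    hconn.isPreconnected hμ hx₀ hreal z hz)

end
end

section
/- Let A be an open subset of ℝ⁴ (coordinates (x₀,x₁,x₂,x₃)) and let μ : A → ℂ be a C² map satisfying on A the equations ∂_{q̄₁}μ − μ·∂_{q₂}μ = 0 and ∂_{q̄₂}μ + μ·∂_{q₁}μ = 0, where ∂_{q₁} = ½(∂₀ − i∂₁), ∂_{q̄₁} = ½(∂₀ + i∂₁), ∂_{q₂} = ½(∂₂ − i∂₃), ∂_{q̄₂} = ½(∂₂ + i∂₃). Then on A: ∑ᵢ₌₀³ ∂²μ/∂xᵢ² = 0 and ∑ᵢ₌₀³ (∂μ/∂xᵢ)² = 0; that is, μ is a harmonic morphism to ℂ. -/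
/-!
Write `∂ₖ`, `∂̄ₖ` for `∂_{qₖ}`, `∂_{q̄ₖ}`, so that the equations are `∂̄₁μ = μ ∂₂μ` and
`∂̄₂μ = -μ ∂₁μ`. Then `∑ᵢ (∂μ/∂xᵢ)² = 4 (∂₁μ ∂̄₁μ + ∂₂μ ∂̄₂μ) = 4 μ (∂₁μ ∂₂μ - ∂₂μ ∂₁μ) = 0`, and
likewise `∑ᵢ ∂²μ/∂xᵢ² = 4 (∂₁∂̄₁μ + ∂₂∂̄₂μ) = 4 (∂₁(μ ∂₂μ) - ∂₂(μ ∂₁μ)) = 4 μ [∂₁, ∂₂]μ = 0`,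
the products of first derivatives cancelling in the Leibniz rule.
-/

noncomputable section

/-- Partial derivative in the `i`-th coordinate direction of a map `ℝ⁴ → ℂ`. -/
def pd (i : Fin 4) (f : (Fin 4 → ℝ) → ℂ) (x : Fin 4 → ℝ) : ℂ :=
  fderiv ℝ f x (Pi.single i 1)

theorem hasFDerivAt_fderiv_apply {𝕜 E F : Type*} [NontriviallyNormedField 𝕜]
    [NormedAddCommGroup E] [NormedSpace 𝕜 E] [NormedAddCommGroup F] [NormedSpace 𝕜 F]
    {f : E → F} {x : E} (hf : DifferentiableAt 𝕜 (fderiv 𝕜 f) x) (u : E) :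
    HasFDerivAt (fun y ↦ fderiv 𝕜 f y u) ((fderiv 𝕜 (fderiv 𝕜 f) x).flip u) x :=
  (ContinuousLinearMap.apply 𝕜 F u).hasFDerivAt.comp x hf.hasFDerivAt

section Wirtinger

open scoped Topology

variable {E : Type*} [NormedAddCommGroup E] [NormedSpace ℝ E]
  {f g : E → ℂ} {x : E} {u v u₁ v₁ u₂ v₂ : E}

/-- The Wirtinger derivative `½(∂ᵤ - i∂ᵥ)`, which is `∂/∂q` for `q = s + it` when `u`, `v` are the
coordinate directions of `s`, `t`. -/
def wirtinger (u v : E) (f : E → ℂ) (x : E) : ℂ :=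
  (fderiv ℝ f x u - Complex.I * fderiv ℝ f x v) / 2

/-- The conjugate Wirtinger derivative `½(∂ᵤ + i∂ᵥ)`, which is `∂/∂q̄` for `q = s + it` when `u`,
`v` are the coordinate directions of `s`, `t`. -/
def wirtingerBar (u v : E) (f : E → ℂ) (x : E) : ℂ :=
  (fderiv ℝ f x u + Complex.I * fderiv ℝ f x v) / 2

theorem wirtingerBar_eq_wirtinger_neg (u v : E) (f : E → ℂ) :
    wirtingerBar u v f = wirtinger u (-v) f := by
  funext x
  simp only [wirtingerBar, wirtinger, map_neg, mul_neg, sub_neg_eq_add]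

theorem wirtinger_congr (h : f =ᶠ[𝓝 x] g) : wirtinger u v f x = wirtinger u v g x := by
  simp only [wirtinger, h.fderiv_eq]

theorem wirtinger_fun_neg : wirtinger u v (fun y ↦ -f y) x = -wirtinger u v f x := by
  simp only [wirtinger, fderiv_fun_neg, neg_apply]
  ring

theorem wirtinger_fun_mul (hf : DifferentiableAt ℝ f x) (hg : DifferentiableAt ℝ g x) :
    wirtinger u v (fun y ↦ f y * g y) x =
      f x * wirtinger u v g x + g x * wirtinger u v f x := by
  simp only [wirtinger, fderiv_fun_mul hf hg, add_apply, smul_apply, smul_eq_mul]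
  ring

theorem four_mul_wirtinger_mul_wirtingerBar :
    4 * (wirtinger u v f x * wirtingerBar u v f x) = fderiv ℝ f x u ^ 2 + fderiv ℝ f x v ^ 2 := by
  simp only [wirtinger, wirtingerBar]
  linear_combination -fderiv ℝ f x v ^ 2 * Complex.I_sq

theorem hasFDerivAt_wirtinger (hf : DifferentiableAt ℝ (fderiv ℝ f) x) (u v : E) :
    HasFDerivAt (wirtinger u v f) ((2 : ℂ)⁻¹ • ((fderiv ℝ (fderiv ℝ f) x).flip u -
      Complex.I • (fderiv ℝ (fderiv ℝ f) x).flip v)) x := by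
  refine (((hasFDerivAt_fderiv_apply hf u).sub
    ((hasFDerivAt_fderiv_apply hf v).const_smul Complex.I)).const_smul (2 : ℂ)⁻¹)
    |>.congr_of_eventuallyEq (.of_forall fun y ↦ ?_)
  exact div_eq_inv_mul _ _

theorem wirtinger_comm (hf : DifferentiableAt ℝ (fderiv ℝ f) x) (hsymm : IsSymmSndFDerivAt ℝ f x) :
    wirtinger u₁ v₁ (wirtinger u₂ v₂ f) x = wirtinger u₂ v₂ (wirtinger u₁ v₁ f) x := by
  rw [wirtinger, wirtinger, (hasFDerivAt_wirtinger hf u₂ v₂).fderiv,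
    (hasFDerivAt_wirtinger hf u₁ v₁).fderiv]
  simp only [smul_apply, sub_apply, ContinuousLinearMap.flip_apply, smul_eq_mul,
    hsymm.eq u₂, hsymm.eq v₂]
  ring

theorem four_mul_wirtinger_wirtingerBar (hf : DifferentiableAt ℝ (fderiv ℝ f) x)
    (hsymm : IsSymmSndFDerivAt ℝ f x) :
    4 * wirtinger u v (wirtingerBar u v f) x =
      fderiv ℝ (fun y ↦ fderiv ℝ f y u) x u + fderiv ℝ (fun y ↦ fderiv ℝ f y v) x v := by
  rw [wirtingerBar_eq_wirtinger_neg, wirtinger, (hasFDerivAt_wirtinger hf u (-v)).fderiv,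
    (hasFDerivAt_fderiv_apply hf u).fderiv, (hasFDerivAt_fderiv_apply hf v).fderiv]
  simp only [smul_apply, sub_apply, ContinuousLinearMap.flip_apply, map_neg, neg_apply,
    smul_eq_mul, hsymm.eq v u]
  linear_combination -fderiv ℝ (fderiv ℝ f) x v v * Complex.I_sq

theorem wirtinger_mul_wirtinger_comm (hf : DifferentiableAt ℝ f x)
    (hf' : DifferentiableAt ℝ (fderiv ℝ f) x) (hsymm : IsSymmSndFDerivAt ℝ f x) :
    wirtinger u₁ v₁ (fun y ↦ f y * wirtinger u₂ v₂ f y) x =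
      wirtinger u₂ v₂ (fun y ↦ f y * wirtinger u₁ v₁ f y) x := by
  rw [wirtinger_fun_mul hf (hasFDerivAt_wirtinger hf' u₂ v₂).differentiableAt,
    wirtinger_fun_mul hf (hasFDerivAt_wirtinger hf' u₁ v₁).differentiableAt,
    wirtinger_comm hf' hsymm]
  ring

theorem sum_sq_fderiv_eq_zero_of_wirtingerBar_eq {e : Fin 4 → E}
    (h₁ : wirtingerBar (e 0) (e 1) f x = f x * wirtinger (e 2) (e 3) f x)
    (h₂ : wirtingerBar (e 2) (e 3) f x = -(f x * wirtinger (e 0) (e 1) f x)) :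
    ∑ i, fderiv ℝ f x (e i) ^ 2 = 0 := by
  rw [Fin.sum_univ_four, add_assoc, ← four_mul_wirtinger_mul_wirtingerBar,
    ← four_mul_wirtinger_mul_wirtingerBar, h₁, h₂]
  ring

theorem sum_fderiv_fderiv_eq_zero_of_wirtingerBar_eq {e : Fin 4 → E} (hf : DifferentiableAt ℝ f x)
    (hf' : DifferentiableAt ℝ (fderiv ℝ f) x) (hsymm : IsSymmSndFDerivAt ℝ f x)
    (h₁ : wirtingerBar (e 0) (e 1) f =ᶠ[𝓝 x] fun y ↦ f y * wirtinger (e 2) (e 3) f y)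
    (h₂ : wirtingerBar (e 2) (e 3) f =ᶠ[𝓝 x] fun y ↦ -(f y * wirtinger (e 0) (e 1) f y)) :
    ∑ i, fderiv ℝ (fun y ↦ fderiv ℝ f y (e i)) x (e i) = 0 := by
  rw [Fin.sum_univ_four, add_assoc, ← four_mul_wirtinger_wirtingerBar hf' hsymm,
    ← four_mul_wirtinger_wirtingerBar hf' hsymm, wirtinger_congr h₁, wirtinger_congr h₂,
    wirtinger_fun_neg, wirtinger_mul_wirtinger_comm hf hf' hsymm]
  ring

theorem hermitian_representative_is_harmonic_morphism_general {A : Set E} (hA : IsOpen A)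
    (e : Fin 4 → E) {μ : E → ℂ} (hμ : DifferentiableOn ℝ μ A)
    (hμ' : DifferentiableOn ℝ (fderiv ℝ μ) A)
    (heq1 : ∀ x ∈ A,
      wirtingerBar (e 0) (e 1) μ x - μ x * wirtinger (e 2) (e 3) μ x = 0)
    (heq2 : ∀ x ∈ A,
      wirtingerBar (e 2) (e 3) μ x + μ x * wirtinger (e 0) (e 1) μ x = 0) :
    ∀ x ∈ A,
      (∑ i, fderiv ℝ (fun y ↦ fderiv ℝ μ y (e i)) x (e i) = 0) ∧
      (∑ i, fderiv ℝ μ x (e i) ^ 2 = 0) := by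
  intro x hx
  have hAx : ∀ᶠ y in 𝓝 x, y ∈ A := hA.mem_nhds hx
  have hμx' : DifferentiableAt ℝ (fderiv ℝ μ) x := hμ'.differentiableAt hAx
  have hsymm : IsSymmSndFDerivAt ℝ μ x := fun v w ↦
    second_derivative_symmetric_of_eventually
      (hAx.mono fun y hy ↦ (hμ.differentiableAt (hA.mem_nhds hy)).hasFDerivAt) hμx'.hasFDerivAt v w
  have heq1' : ∀ y ∈ A, wirtingerBar (e 0) (e 1) μ y = μ y * wirtinger (e 2) (e 3) μ y :=
    fun y hy ↦ sub_eq_zero.mp (heq1 y hy)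
  have heq2' : ∀ y ∈ A, wirtingerBar (e 2) (e 3) μ y = -(μ y * wirtinger (e 0) (e 1) μ y) :=
    fun y hy ↦ eq_neg_of_add_eq_zero_left (heq2 y hy)
  exact ⟨sum_fderiv_fderiv_eq_zero_of_wirtingerBar_eq (hμ.differentiableAt hAx) hμx' hsymm
      (hAx.mono heq1') (hAx.mono heq2'),
    sum_sq_fderiv_eq_zero_of_wirtingerBar_eq (heq1' x hx) (heq2' x hx)⟩

end Wirtinger

/-- Proposition 6.2: a `C²` map `μ` on an open subset of `ℝ⁴` satisfying the Hermitian
structure equations `∂_{q̄₁}μ − μ ∂_{q₂}μ = 0` and `∂_{q̄₂}μ + μ ∂_{q₁}μ = 0`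
(with `∂_{q₁} = ½(∂₀ − i∂₁)` etc.) is a harmonic morphism:
`∑ᵢ ∂²μ/∂xᵢ² = 0` and `∑ᵢ (∂μ/∂xᵢ)² = 0`. -/
theorem hermitian_representative_is_harmonic_morphism
    (A : Set (Fin 4 → ℝ)) (hA : IsOpen A)
    (μ : (Fin 4 → ℝ) → ℂ) (hμ : ContDiffOn ℝ 2 μ A)
    (heq1 : ∀ x ∈ A,
      (pd 0 μ x + Complex.I * pd 1 μ x) / 2
        - μ x * ((pd 2 μ x - Complex.I * pd 3 μ x) / 2) = 0)
    (heq2 : ∀ x ∈ A,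
      (pd 2 μ x + Complex.I * pd 3 μ x) / 2
        + μ x * ((pd 0 μ x - Complex.I * pd 1 μ x) / 2) = 0) :
    ∀ x ∈ A,
      (∑ i : Fin 4, pd i (pd i μ) x = 0) ∧
      (∑ i : Fin 4, (pd i μ x) ^ 2 = 0) := by
  have hμ' : DifferentiableOn ℝ (fderiv ℝ μ) A :=
    (hμ.fderiv_of_isOpen hA le_rfl).differentiableOn one_ne_zero
  exact hermitian_representative_is_harmonic_morphism_general hA (fun i ↦ Pi.single i 1)
    (hμ.differentiableOn two_ne_zero) hμ' heq1 heq2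

end
end
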